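/- arXiv:1510.03052 — 2 statements merged into one kernel-verified Lean document; each statement's English description precedes it below -/
import Mathlib

section
/- There are, up to isomorphism, exactly three (2)-bipancyclic graphs on 14 vertices with at most 19 edges. -/
open SimpleGraph

/-- The number of cycles of length `k` in `G`, counted as subgraphs of `G`
isomorphic to the cycle graph `C_k`. -/
noncomputable def cycleCount {V : Type*} (G : SimpleGraph V) (k : ℕ) : ℕ :=
  {H : G.Subgraph | Nonempty (H.coe ≃g cycleGraph k)}.ncard

/-- A bipartite graph on an even number `v ≥ 4` of vertices is `(r)`-bipancyclic if
it contains precisely `r` cycles of each even length from `4` to `v`. -/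
def IsRBipancyclic {V : Type*} [Fintype V] (G : SimpleGraph V) (r : ℕ) : Prop :=
  G.Colorable 2 ∧ Even (Fintype.card V) ∧ 4 ≤ Fintype.card V ∧
    ∀ k : ℕ, 4 ≤ k → k ≤ Fintype.card V → Even k → cycleCount G k = r

/-- There are, up to isomorphism, exactly `N` graphs on `v` vertices with at most
`b` edges satisfying the given pancyclicity property with parameter `r`. -/
def ExactlyNUpToIso (r N v b : ℕ) : Prop :=
  ∃ Gs : Fin N → SimpleGraph (Fin v),
    (∀ i j : Fin N, i ≠ j → IsEmpty (Gs i ≃g Gs j)) ∧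
    (∀ i : Fin N, IsRBipancyclic (Gs i) r ∧ (Gs i).edgeSet.ncard ≤ b) ∧
    (∀ (W : Type) [Fintype W] (G : SimpleGraph W), Fintype.card W = v →
      G.edgeSet.ncard ≤ b → IsRBipancyclic G r → ∃ i : Fin N, Nonempty (G ≃g Gs i))

def nb : List (ℕ × ℕ) → ℕ → List ℕ
  | [], _ => []
  | (a, b) :: L, x =>
    bif Nat.beq a x then b :: nb L x else bif Nat.beq b x then a :: nb L x else nb L x

def notIn : List ℕ → ℕ → Bool
  | [], _ => true
  | a :: l, x => bif Nat.beq a x then false else notIn l x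

def paths (L : List (ℕ × ℕ)) : ℕ → List ℕ → ℕ → ℕ → List (List ℕ)
  | 0, _, _, _ => []
  | f + 1, vis, x, v =>
    bif Nat.beq x v then [[x]] else
      ((nb L x).filter (fun y => notIn (x :: vis) y)).flatMap
        (fun y => (paths L f (x :: vis) y v).map (List.cons x))

def lens (L : List (ℕ × ℕ)) : ℕ → List ℕ → ℕ → ℕ → List ℕ → ℕ → List ℕ
  | 0, _, _, _, acc, _ => acc
  | f + 1, vis, x, v, acc, d =>
    bif Nat.beq x v then Nat.succ d :: acc else
      (nb L x).foldr (fun y acc =>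
        bif notIn (x :: vis) y then lens L f (x :: vis) y v acc (Nat.succ d) else acc) acc

def addLens (L : List (ℕ × ℕ)) (e : ℕ × ℕ) (c : List ℕ) : List ℕ :=
  lens L 14 [] e.1 e.2 c 0

def cyc : List (ℕ × ℕ) → List ℕ
  | [] => []
  | e :: L => addLens L e (cyc L)

def cnt : List ℕ → ℕ → ℕ
  | [], _ => 0
  | a :: l, k => bif Nat.beq a k then (cnt l k).succ else cnt l k

def relB : List (ℕ × ℕ) → ℕ → ℕ → Bool
  | [], _, _ => false
  | (a, b) :: L, x, y =>
    (Nat.beq a x && Nat.beq b y) || (Nat.beq a y && Nat.beq b x) || relB L x y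

def tgt : ℕ → List (ℕ × ℕ)
  | 0 => [(4, 9), (3, 8), (0, 3), (0, 1), (1, 2), (2, 3), (3, 4), (4, 5), (5, 6), (6, 7), (7, 8),
      (8, 9), (9, 10), (10, 11), (11, 12), (12, 13), (13, 0)]
  | 1 => [(5, 10), (4, 9), (0, 3), (0, 1), (1, 2), (2, 3), (3, 4), (4, 5), (5, 6), (6, 7), (7, 8),
      (8, 9), (9, 10), (10, 11), (11, 12), (12, 13), (13, 0)]
  | _ => [(6, 11), (5, 10), (0, 3), (0, 1), (1, 2), (2, 3), (3, 4), (4, 5), (5, 6), (6, 7), (7, 8),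
      (8, 9), (9, 10), (10, 11), (11, 12), (12, 13), (13, 0)]

def ham : List (ℕ × ℕ) :=
  [(0, 1), (1, 2), (2, 3), (3, 4), (4, 5), (5, 6), (6, 7), (7, 8),
      (8, 9), (9, 10), (10, 11), (11, 12), (12, 13), (13, 0)]

def chords7 : List (ℕ × ℕ) := [(1, 8), (2, 9), (3, 10), (4, 11), (5, 12), (6, 13)]

def chords3 : List (ℕ × ℕ) := [(1, 4), (2, 5), (3, 6), (4, 7), (5, 8), (6, 9), (7, 10),
  (8, 11), (9, 12), (10, 13), (11, 0), (12, 1), (13, 2)]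

def chords5 : List (ℕ × ℕ) := [(0, 5), (1, 6), (2, 7), (3, 8), (4, 9), (5, 10), (6, 11), (7, 12),
  (8, 13), (9, 0), (10, 1), (11, 2), (12, 3), (13, 4)]

def refl14 (x : ℕ) : ℕ := (17 - x) % 14

def isoB (s : ℕ → ℕ) (L M : List (ℕ × ℕ)) : Bool :=
  L.all (fun e => relB M (s e.1) (s e.2)) && M.all (fun e => relB L (s e.1) (s e.2))

def isoAny (L : List (ℕ × ℕ)) : Bool :=
  isoB id L (tgt 0) || isoB id L (tgt 1) || isoB id L (tgt 2) ||
  isoB refl14 L (tgt 0) || isoB refl14 L (tgt 1) || isoB refl14 L (tgt 2)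

def okLe (c : List ℕ) : Bool := [4, 6, 8, 10, 12, 14].all (fun k => Nat.ble (cnt c k) 2)

def okEq (c : List ℕ) : Bool := [4, 6, 8, 10, 12, 14].all (fun k => Nat.beq (cnt c k) 2)

def search : List (ℕ × ℕ) → List (ℕ × ℕ) → List ℕ → Bool
  | [], L, c => bif okEq c then isoAny L else true
  | e :: rest, L, c =>
    search rest L c &&
      (bif okLe (addLens L e c) then search rest (e :: L) (addLens L e c) else true)


def rel (L : List (ℕ × ℕ)) (a b : ℕ) : Prop := (a, b) ∈ L ∨ (b, a) ∈ L

lemma rel_symm {L a b} (h : rel L a b) : rel L b a := h.symm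

def good : List (ℕ × ℕ) → Prop
  | [] => True
  | e :: L => ¬ rel L e.1 e.2 ∧ good L

lemma relB_iff (L x y) : relB L x y = true ↔ rel L x y := by
  induction L with
  | nil => simp [relB, rel]
  | cons e L ih =>
    obtain ⟨a, b⟩ := e
    simp only [relB, Bool.or_eq_true, Bool.and_eq_true, Nat.beq_eq, ih, rel, List.mem_cons,
      Prod.mk.injEq]
    grind

lemma mem_nb (L x y) : y ∈ nb L x ↔ rel L x y := by
  induction L with
  | nil => simp [nb, rel]
  | cons e L ih =>
    obtain ⟨a, b⟩ := e
    simp only [nb, rel, List.mem_cons, Prod.mk.injEq] at ih ⊢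
    cases h : Nat.beq a x <;> cases h' : Nat.beq b x <;>
      simp only [cond_true, cond_false, List.mem_cons, ih] <;>
      simp only [Nat.beq_eq, ← Bool.not_eq_true] at h h' <;> grind

lemma nodup_nb (L x) (hL : good L) : (nb L x).Nodup := by
  induction L with
  | nil => simp [nb]
  | cons e L ih =>
    obtain ⟨a, b⟩ := e
    obtain ⟨h1, h2⟩ := hL
    simp only [nb]
    cases h : Nat.beq a x <;> cases h' : Nat.beq b x <;>
      simp only [cond_true, cond_false, List.nodup_cons, ih h2, mem_nb, and_true] <;>
      simp only [Nat.beq_eq, ← Bool.not_eq_true] at h h' <;> subst_vars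
    · exact fun h => h1 (rel_symm h)
    · exact h1
    · exact h1

lemma notIn_iff (l x) : notIn l x = true ↔ x ∉ l := by
  induction l with
  | nil => simp [notIn]
  | cons a l ih =>
    simp only [notIn]
    cases h : Nat.beq a x <;>
      simp only [cond_true, cond_false, List.mem_cons, ih] <;>
      simp only [Nat.beq_eq, ← Bool.not_eq_true] at h <;> grind

lemma cnt_eq (l k) : cnt l k = l.count k := by
  induction l with
  | nil => simp [cnt]
  | cons a l ih =>
    simp only [cnt]
    cases h : Nat.beq a k <;>
      simp only [cond_true, cond_false, ih] <;>
      simp only [Nat.beq_eq, ← Bool.not_eq_true] at h <;> grind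

lemma lens_eq (L f vis x v acc d) :
    lens L f vis x v acc d = (paths L f vis x v).map (fun p => p.length + d) ++ acc := by
  induction f generalizing vis x acc d with
  | zero => simp [lens, paths]
  | succ f ih =>
    simp only [lens, paths]
    cases h : Nat.beq x v
    · simp only [cond_false]
      induction nb L x generalizing acc with
      | nil => simp
      | cons y l ihl =>
        rw [List.foldr_cons, ihl]
        cases hy : notIn (x :: vis) y
        · simp [hy]
        · simp [hy, ih, Function.comp_def, Nat.add_assoc, Nat.add_comm 1]
    · simp [Nat.add_comm 1]

lemma mem_paths (L f vis x v p) (hx : x ∉ vis) : p ∈ paths L f vis x v ↔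
    p.length ≤ f ∧ p.Nodup ∧ (∀ a ∈ p, a ∉ vis) ∧ p.IsChain (rel L) ∧ p.head? = some x ∧
      p.getLast? = some v := by
  induction f generalizing vis x p with
  | zero =>
    simp only [paths, List.not_mem_nil, false_iff]
    rintro ⟨h, -, -, -, h2, -⟩
    have : p = [] := by simpa using h
    simp [this] at h2
  | succ f ih =>
    simp only [paths]
    cases h : Nat.beq x v
    · have hxv : x ≠ v := by simp only [Nat.beq_eq, ← Bool.not_eq_true] at h; exact h
      simp only [cond_false, List.mem_flatMap, List.mem_filter, List.mem_map, notIn_iff, mem_nb]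
      constructor
      · rintro ⟨y, ⟨hxy, hy⟩, q, hq, rfl⟩
        rw [ih _ _ _ hy] at hq
        obtain ⟨h1, h2, h3, h4, h5, h6⟩ := hq
        cases q with
        | nil => simp at h5
        | cons z q =>
          simp only [List.head?_cons, Option.some.injEq] at h5
          subst h5
          refine ⟨by simpa using h1, ?_, ?_, ?_, by simp, ?_⟩
          · rw [List.nodup_cons]
            exact ⟨fun hm => h3 _ hm (by simp), h2⟩
          · intro a ha
            rcases List.mem_cons.1 ha with rfl | ha
            · exact hx
            · exact fun hv => h3 _ ha (by simp [hv])
          · rw [List.isChain_cons_cons]; exact ⟨hxy, h4⟩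
          · rw [List.getLast?_cons_cons]; exact h6
      · rintro ⟨h1, h2, h3, h4, h5, h6⟩
        cases p with
        | nil => simp at h5
        | cons z q =>
          simp only [List.head?_cons, Option.some.injEq] at h5
          subst h5
          cases q with
          | nil => simp at h6; exact absurd h6 hxv
          | cons y q =>
            rw [List.isChain_cons_cons] at h4
            rw [List.getLast?_cons_cons] at h6
            rw [List.nodup_cons] at h2
            have hy : y ∉ z :: vis := by
              intro hm
              rcases List.mem_cons.1 hm with rfl | hm
              · exact h2.1 (by simp)
              · exact h3 y (by simp) hm
            refine ⟨y, ⟨h4.1, hy⟩, y :: q, ?_, rfl⟩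
            rw [ih _ _ _ hy]
            refine ⟨by simpa using h1, h2.2, ?_, h4.2, by simp, h6⟩
            intro a ha hm
            rcases List.mem_cons.1 hm with rfl | hm
            · exact h2.1 ha
            · exact h3 a (by simp only [List.mem_cons] at ha ⊢; tauto) hm
    · have hxv : x = v := by simpa only [Nat.beq_eq] using h
      subst hxv
      simp only [cond_true, List.mem_singleton]
      constructor
      · rintro rfl
        simp [hx]
      · rintro ⟨h1, h2, h3, h4, h5, h6⟩
        cases p with
        | nil => simp at h5
        | cons z q =>
          simp only [List.head?_cons, Option.some.injEq] at h5
          subst h5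
          cases q with
          | nil => rfl
          | cons y q =>
            rw [List.getLast?_cons_cons] at h6
            exact absurd (List.mem_of_getLast? h6) (List.nodup_cons.1 h2).1

lemma nodup_paths (L f vis x v) (hL : good L) : (paths L f vis x v).Nodup := by
  induction f generalizing vis x with
  | zero => simp [paths]
  | succ f ih =>
    simp only [paths]
    cases h : Nat.beq x v
    · simp only [cond_false]
      rw [List.nodup_flatMap]
      refine ⟨fun y _ => (ih _ _).map (List.cons_injective), ?_⟩
      have hn := (nodup_nb L x hL).filter (fun y => notIn (x :: vis) y)
      refine List.Pairwise.imp_of_mem ?_ hn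
      intro a b ha hb hab
      simp only [List.mem_filter, notIn_iff] at ha hb
      intro p hp hq
      simp only [List.mem_map] at hp hq
      obtain ⟨p, hp, rfl⟩ := hp
      obtain ⟨q, hq, he⟩ := hq
      rw [mem_paths _ _ _ _ _ _ ha.2] at hp
      rw [mem_paths _ _ _ _ _ _ hb.2] at hq
      have : q = p := by simpa using he
      subst this
      have := hp.2.2.2.2.1.symm.trans hq.2.2.2.2.1
      exact hab (by simpa using this)
    · simp

section cyclesets
open Fin.CommRing

def cycEdges {n : ℕ} (g : Fin (n + 3) → ℕ) : Set (Sym2 ℕ) :=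
  Set.range (fun i => s(g i, g (i + 1)))

def cycSets (R : ℕ → ℕ → Prop) (n : ℕ) : Set (Set (Sym2 ℕ)) :=
  {E | ∃ g : Fin (n + 3) → ℕ, Function.Injective g ∧ (∀ i, R (g i) (g (i + 1))) ∧
    E = cycEdges g}

def pathFns (R : ℕ → ℕ → Prop) (n u v : ℕ) : Set (Fin (n + 3) → ℕ) :=
  {g | Function.Injective g ∧ g 0 = u ∧ g (-1) = v ∧ ∀ i, i ≠ -1 → R (g i) (g (i + 1))}

lemma two_ne (n : ℕ) : (2 : Fin (n + 3)) ≠ 0 := by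
  intro h
  have := congrArg Fin.val h
  simp only [Fin.coe_ofNat_eq_mod] at this
  rw [Nat.mod_eq_of_lt (by omega)] at this
  simp at this

lemma pathFns_inj (R n u v) : Set.InjOn cycEdges (pathFns R n u v) := by
  rintro g ⟨gi, g0, g1, -⟩ g' ⟨gi', g0', g1', -⟩ he
  have key : ∀ m : ℕ, g ((m : Fin (n + 3)) - 1) = g' ((m : Fin (n + 3)) - 1) ∧
      g (m : Fin (n + 3)) = g' (m : Fin (n + 3)) := by
    intro m
    induction m with
    | zero => simp [g0, g0', g1, g1']
    | succ m ih =>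
      obtain ⟨h1, h2⟩ := ih
      push_cast
      refine ⟨by simpa using h2, ?_⟩
      have hm : s(g (m : Fin (n + 3)), g ((m : Fin (n + 3)) + 1)) ∈ cycEdges g' := by
        rw [← he]; exact ⟨_, rfl⟩
      obtain ⟨j, hj⟩ := hm
      simp only [Sym2.eq_iff] at hj
      rcases hj with ⟨a, b⟩ | ⟨a, b⟩
      · rw [h2] at a
        have := gi' a
        subst this
        exact b.symm
      · rw [h2] at b
        have := gi' b
        have hj : j = (m : Fin (n + 3)) - 1 := by rw [← this]; ring
        rw [hj, ← h1] at a
        have := gi a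
        exfalso
        apply two_ne n
        linear_combination -this
  funext i
  have := (key i.val).2
  simpa using this

lemma mem_cycEdges_first {n} (g : Fin (n + 3) → ℕ) : s(g 0, g (-1)) ∈ cycEdges g :=
  ⟨-1, by simp [Sym2.eq_swap]⟩

lemma cycEdges_rot {n} (g : Fin (n + 3) → ℕ) (c : Fin (n + 3)) :
    cycEdges (fun j => g (j + c)) = cycEdges g := by
  ext e
  constructor
  · rintro ⟨i, rfl⟩
    refine ⟨i + c, ?_⟩
    have h : i + 1 + c = i + c + 1 := by ring
    simp only [h]
  · rintro ⟨i, rfl⟩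
    refine ⟨i - c, ?_⟩
    have h : i - c + 1 + c = i + 1 := by ring
    simp only [h, sub_add_cancel]

lemma cycEdges_refl {n} (g : Fin (n + 3) → ℕ) (c : Fin (n + 3)) :
    cycEdges (fun j => g (c - j)) = cycEdges g := by
  ext e
  constructor
  · rintro ⟨i, rfl⟩
    refine ⟨c - i - 1, ?_⟩
    have h1 : c - (c - i - 1) = i + 1 := by ring
    have h2 : c - (c - i - 1 + 1) = i := by ring
    have h3 : c - i - 1 + 1 = c - i := by ring
    have h4 : c - (i + 1) = c - i - 1 := by ring
    simp only [h3, h4]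
    rw [Sym2.eq_swap]
  · rintro ⟨i, rfl⟩
    refine ⟨c - i - 1, ?_⟩
    have h1 : c - (c - i - 1) = i + 1 := by ring
    have h2 : c - (c - i - 1 + 1) = i := by ring
    have h3 : c - i - 1 + 1 = c - i := by ring
    have h4 : c - (i + 1) = c - i - 1 := by ring
    simp only [h1, h2]
    rw [Sym2.eq_swap]

lemma cycSets_cons (L : List (ℕ × ℕ)) (u v n : ℕ) :
    cycSets (rel ((u, v) :: L)) n = cycSets (rel L) n ∪ cycEdges '' pathFns (rel L) n u v := by
  have hr : ∀ a b, rel ((u, v) :: L) a b ↔ s(a, b) = s(u, v) ∨ rel L a b := by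
    intro a b
    simp only [rel, List.mem_cons, Prod.mk.injEq, Sym2.eq_iff]
    tauto
  ext E
  constructor
  · rintro ⟨g, gi, gR, rfl⟩
    by_cases hu : ∃ i, s(g i, g (i + 1)) = s(u, v)
    · right
      have main : ∀ h : Fin (n + 3) → ℕ, Function.Injective h →
          (∀ i, rel ((u, v) :: L) (h i) (h (i + 1))) → cycEdges h = cycEdges g →
          h 0 = u → h (-1) = v → cycEdges g ∈ cycEdges '' pathFns (rel L) n u v := by
        intro h hi hR he h0 h1
        refine ⟨h, ⟨hi, h0, h1, ?_⟩, he⟩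
        intro i hne
        refine ((hr _ _).1 (hR i)).resolve_left ?_
        rw [← h0, ← h1, Sym2.eq_iff]
        rintro (⟨a, b⟩ | ⟨a, b⟩)
        · have a := hi a
          have b := hi b
          apply two_ne n
          linear_combination b - a
        · exact hne (hi a)
      obtain ⟨i, hi⟩ := hu
      rw [Sym2.eq_iff] at hi
      rcases hi with ⟨a, b⟩ | ⟨a, b⟩
      · refine main (fun j => g (i - j)) (fun x y hxy => ?_) (fun j => ?_) (cycEdges_refl g i)
          (by simpa using a) (by simpa using b)
        · have := gi hxy
          linear_combination -this
        · have := rel_symm (gR (i - j - 1))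
          convert this using 2 <;> ring
      · refine main (fun j => g (j + (i + 1))) (fun x y hxy => ?_) (fun j => ?_)
          (cycEdges_rot g _) (by simpa using b) (by simpa using a)
        · have := gi hxy
          linear_combination this
        · have := (gR (j + (i + 1)))
          convert this using 2; ring
    · left
      refine ⟨g, gi, fun i => ?_, rfl⟩
      exact ((hr _ _).1 (gR i)).resolve_left (fun h => hu ⟨i, h⟩)
  · rintro (⟨g, gi, gR, rfl⟩ | ⟨g, ⟨gi, g0, g1, gR⟩, rfl⟩)
    · exact ⟨g, gi, fun i => (hr _ _).2 (Or.inr (gR i)), rfl⟩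
    · refine ⟨g, gi, fun i => ?_, rfl⟩
      rw [hr]
      by_cases h : i = -1
      · left
        subst h
        simp [g0, g1, Sym2.eq_swap]
      · exact Or.inr (gR i h)

lemma cycSets_disj (L : List (ℕ × ℕ)) (u v n : ℕ) (h : ¬ rel L u v) :
    Disjoint (cycSets (rel L) n) (cycEdges '' pathFns (rel L) n u v) := by
  rw [Set.disjoint_left]
  rintro E ⟨g, gi, gR, rfl⟩ ⟨g', ⟨gi', g0, g1, gR'⟩, he⟩
  have := mem_cycEdges_first g'
  rw [he, g0, g1] at this
  obtain ⟨i, hi⟩ := this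
  simp only [Sym2.eq_iff] at hi
  have := gR i
  rcases hi with ⟨a, b⟩ | ⟨a, b⟩
  · rw [a, b] at this; exact h this
  · rw [a, b] at this; exact h (rel_symm this)

lemma pathFns_image (L : List (ℕ × ℕ)) (u v n : ℕ) (hn : n + 3 ≤ 14) :
    List.ofFn '' pathFns (rel L) n u v =
      ↑((paths L 14 [] u v).filter (fun p => p.length = n + 3)).toFinset := by
  ext p
  simp only [Set.mem_image, List.coe_toFinset, Set.mem_ofPred_eq, List.mem_filter,
    decide_eq_true_eq, mem_paths L 14 [] u v _ (List.not_mem_nil)]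
  have hlast : (-1 : Fin (n + 3)) = Fin.last (n + 2) := by
    rw [neg_eq_iff_add_eq_zero]
    apply Fin.ext
    simp only [Fin.val_add, Fin.val_last, Fin.coe_ofNat_eq_mod]
    rw [Nat.mod_eq_of_lt (show 1 < n + 3 by omega), show 1 + (n + 2) = n + 3 by omega,
      Nat.mod_self, Nat.zero_mod]
  have hh : ∀ g : Fin (n + 3) → ℕ, (List.ofFn g).head? = some (g 0) := by
    intro g; simp [List.ofFn_succ]
  have hl : ∀ g : Fin (n + 3) → ℕ, (List.ofFn g).getLast? = some (g (-1)) := by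
    intro g
    rw [hlast, List.ofFn_succ', List.concat_eq_append, List.getLast?_append]; rfl
  have hc : ∀ g : Fin (n + 3) → ℕ, (List.ofFn g).IsChain (rel L) ↔
      ∀ i, i ≠ -1 → rel L (g i) (g (i + 1)) := by
    intro g
    rw [List.isChain_ofFn]
    constructor
    · intro h i hi
      have h1 : i.val + 1 < n + 3 := by
        have : i.val ≠ n + 2 := fun h => hi (by rw [hlast]; exact Fin.ext h)
        omega
      have := h i.val h1
      convert this using 2
      apply Fin.ext
      simp [Fin.val_add, Nat.mod_eq_of_lt h1]
    · intro h i hi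
      have := h ⟨i, by omega⟩ (by rw [hlast]; intro h; have := congrArg Fin.val h; simp at this; omega)
      convert this using 2
      apply Fin.ext
      simp [Fin.val_add, Nat.mod_eq_of_lt hi]
  constructor
  · rintro ⟨g, ⟨gi, g0, g1, gR⟩, rfl⟩
    refine ⟨⟨by rw [List.length_ofFn]; exact hn, List.nodup_ofFn.2 gi, by simp, (hc g).2 gR, ?_, ?_⟩, by simp⟩
    · rw [hh, g0]
    · rw [hl, g1]
  · rintro ⟨⟨h1, h2, -, h4, h5, h6⟩, h7⟩
    obtain ⟨g, rfl⟩ : ∃ g : Fin (n + 3) → ℕ, List.ofFn g = p :=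
      ⟨fun i => p[i.val]'(by omega), by
        apply List.ext_getElem
        · rw [List.length_ofFn, h7]
        · intro i h1 h2
          rw [List.getElem_ofFn]⟩
    refine ⟨g, ⟨List.nodup_ofFn.1 h2, ?_, ?_, (hc g).1 h4⟩, rfl⟩
    · rw [hh] at h5; simpa using h5
    · rw [hl] at h6; simpa using h6

lemma pathFns_card (L : List (ℕ × ℕ)) (u v n : ℕ) (hn : n + 3 ≤ 14) (hL : good L) :
    (cycEdges '' pathFns (rel L) n u v).Finite ∧
    (cycEdges '' pathFns (rel L) n u v).ncard =
      ((paths L 14 [] u v).map List.length).count (n + 3) := by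
  have h := pathFns_image L u v n hn
  have hi : Set.InjOn (List.ofFn : (Fin (n + 3) → ℕ) → List ℕ) (pathFns (rel L) n u v) :=
    fun a _ b _ h => List.ofFn_injective h
  have hf : (pathFns (rel L) n u v).Finite := by
    apply Set.Finite.of_finite_image _ hi
    rw [h]; exact Finset.finite_toSet _
  refine ⟨hf.image _, ?_⟩
  rw [(pathFns_inj _ _ _ _).ncard_image, ← hi.ncard_image, h,
    Set.ncard_coe_finset, List.toFinset_card_of_nodup ((nodup_paths L _ _ _ _ hL).filter _),
    List.count, List.countP_map, List.countP_eq_length_filter]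
  rfl

theorem cycSets_card (L : List (ℕ × ℕ)) (n : ℕ) (hn : n + 3 ≤ 14) (hL : good L) :
    (cycSets (rel L) n).Finite ∧ (cycSets (rel L) n).ncard = (cyc L).count (n + 3) := by
  induction L with
  | nil =>
    have : cycSets (rel []) n = ∅ := by
      rw [Set.eq_empty_iff_forall_notMem]
      rintro E ⟨g, -, h, -⟩
      simpa [rel] using h 0
    rw [this]
    simp [cyc]
  | cons e L ih =>
    obtain ⟨u, v⟩ := e
    obtain ⟨h1, h2⟩ := hL
    obtain ⟨f1, c1⟩ := ih h2
    obtain ⟨f2, c2⟩ := pathFns_card L u v n hn h2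
    rw [cycSets_cons]
    refine ⟨f1.union f2, ?_⟩
    rw [Set.ncard_union_eq (cycSets_disj L u v n h1) f1 f2, c1, c2]
    simp [cyc, addLens, lens_eq, List.count_append, Nat.add_comm]

lemma cycSets_mono {R S : ℕ → ℕ → Prop} (h : ∀ a b, R a b → S a b) (n : ℕ) :
    cycSets R n ⊆ cycSets S n := by
  rintro E ⟨g, gi, gR, rfl⟩
  exact ⟨g, gi, fun i => h _ _ (gR i), rfl⟩

end cyclesets

section transfer
open Fin.CommRing

def relOf {W : Type*} (f : W → ℕ) (G : SimpleGraph W) (x y : ℕ) : Prop :=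
  ∃ a b, f a = x ∧ f b = y ∧ G.Adj a b

lemma cyc_adj {n : ℕ} (i j : Fin (n + 3)) :
    (cycleGraph (n + 3)).Adj i j ↔ j = i + 1 ∨ i = j + 1 := by
  rw [cycleGraph_adj, sub_eq_iff_eq_add, sub_eq_iff_eq_add, add_comm 1 j, add_comm 1 i]
  tauto

theorem cycleCount_eq {W : Type*} (f : W → ℕ) (hf : Function.Injective f) (G : SimpleGraph W)
    (n : ℕ) : cycleCount G (n + 3) = (cycSets (relOf f G) n).ncard := by
  have himg : (fun H : G.Subgraph => Sym2.map f '' H.edgeSet) ''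
      {H : G.Subgraph | Nonempty (H.coe ≃g cycleGraph (n + 3))} = cycSets (relOf f G) n := by
    ext E
    constructor
    · rintro ⟨H, ⟨e⟩, rfl⟩
      have hadj : ∀ i, H.Adj (e.symm i).val (e.symm (i + 1)).val := by
        intro i
        have : H.coe.Adj (e.symm i) (e.symm (i + 1)) := by
          rw [e.symm.map_adj_iff, cyc_adj]; exact Or.inl rfl
        exact this
      refine ⟨fun i => f (e.symm i).val, ?_, ?_, ?_⟩
      · intro i j hij
        exact e.symm.injective (Subtype.ext (hf hij))
      · intro i
        exact ⟨_, _, rfl, rfl, (hadj i).adj_sub⟩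
      · ext s
        constructor
        · rintro ⟨t, ht, rfl⟩
          induction t with
          | h a b =>
            rw [Subgraph.mem_edgeSet] at ht
            have h1 : H.coe.Adj ⟨a, H.edge_vert ht⟩ ⟨b, H.edge_vert ht.symm⟩ := ht
            rw [← e.map_adj_iff, cyc_adj] at h1
            rcases h1 with h1 | h1
            · exact ⟨e ⟨a, H.edge_vert ht⟩, by simp only [← h1]; simp⟩
            · exact ⟨e ⟨b, H.edge_vert ht.symm⟩, by simp only [← h1]; simp [Sym2.eq_swap]⟩
        · rintro ⟨i, rfl⟩
          exact ⟨s((e.symm i).val, (e.symm (i + 1)).val), hadj i, by simp⟩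
    · rintro ⟨g, gi, gR, rfl⟩
      have hx : ∀ i, ∃ a, f a = g i := fun i => by
        obtain ⟨a, b, h1, h2, h3⟩ := gR i
        exact ⟨a, h1⟩
      choose a ha using hx
      have ai : Function.Injective a := fun i j h => gi (by rw [← ha, ← ha, h])
      have aG : ∀ i, G.Adj (a i) (a (i + 1)) := fun i => by
        obtain ⟨x, y, h1, h2, h3⟩ := gR i
        rw [← ha] at h1 h2
        rwa [hf h1, hf h2] at h3
      let H : G.Subgraph :=
        { verts := Set.range a
          Adj := fun x y => ∃ i, s(x, y) = s(a i, a (i + 1))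
          adj_sub := by
            rintro x y ⟨i, hi⟩
            rw [Sym2.eq_iff] at hi
            rcases hi with ⟨rfl, rfl⟩ | ⟨rfl, rfl⟩
            · exact aG i
            · exact (aG i).symm
          edge_vert := by
            rintro x y ⟨i, hi⟩
            rw [Sym2.eq_iff] at hi
            rcases hi with ⟨rfl, rfl⟩ | ⟨rfl, rfl⟩
            · exact ⟨_, rfl⟩
            · exact ⟨_, rfl⟩
          symm := ⟨by
            rintro x y ⟨i, hi⟩
            exact ⟨i, by rw [Sym2.eq_swap, hi]⟩⟩ }
      refine ⟨H, ⟨?_⟩, ?_⟩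
      · refine SimpleGraph.Iso.symm ⟨Equiv.ofInjective a ai, ?_⟩
        intro i j
        rw [cyc_adj]
        change (∃ l, s(a i, a j) = s(a l, a (l + 1))) ↔ _
        constructor
        · rintro ⟨l, hl⟩
          rw [Sym2.eq_iff] at hl
          rcases hl with ⟨h1, h2⟩ | ⟨h1, h2⟩
          · left; rw [ai h1, ai h2]
          · right; rw [ai h1, ai h2]
        · rintro (rfl | rfl)
          · exact ⟨_, rfl⟩
          · exact ⟨_, Sym2.eq_swap⟩
      · ext s
        constructor
        · rintro ⟨t, ht, rfl⟩
          induction t with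
          | h x y =>
            obtain ⟨i, hi⟩ := ht
            exact ⟨i, by rw [hi]; simp [ha]⟩
        · rintro ⟨i, rfl⟩
          exact ⟨s(a i, a (i + 1)), ⟨i, rfl⟩, by simp [ha]⟩
  rw [cycleCount, ← himg, Set.InjOn.ncard_image]
  have hv : ∀ H H' : G.Subgraph, Nonempty (H.coe ≃g cycleGraph (n + 3)) →
      H.edgeSet = H'.edgeSet → H.verts ⊆ H'.verts := by
    rintro H H' ⟨e⟩ he x hx
    have : H.coe.Adj ⟨x, hx⟩ (e.symm (e ⟨x, hx⟩ + 1)) := by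
      rw [← e.map_adj_iff, cyc_adj]; simp
    have h2 : s(x, (e.symm (e ⟨x, hx⟩ + 1)).val) ∈ H.edgeSet := this
    rw [he] at h2
    exact H'.edge_vert h2
  intro H hH H' hH' he
  have he' : H.edgeSet = H'.edgeSet := (Sym2.map.injective hf).image_injective he
  apply Subgraph.ext
  · exact Set.Subset.antisymm (hv _ _ hH he') (hv _ _ hH' he'.symm)
  · ext x y
    rw [← Subgraph.mem_edgeSet, he', Subgraph.mem_edgeSet]

end transfer

lemma okLe_of (L : List (ℕ × ℕ))
    (h : ∀ n ∈ [1, 3, 5, 7, 9, 11], (cyc L).count (n + 3) ≤ 2) : okLe (cyc L) = true := by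
  simp only [okLe, List.all_eq_true, Nat.ble_eq, cnt_eq]
  simpa using h

lemma okEq_iff (L : List (ℕ × ℕ)) : okEq (cyc L) = true ↔
    ∀ n ∈ [1, 3, 5, 7, 9, 11], (cyc L).count (n + 3) = 2 := by
  simp only [okEq, List.all_eq_true, Nat.beq_eq, cnt_eq]
  simp

theorem search_sound (R : ℕ → ℕ → Prop) (hs : ∀ a b, R a b → R b a)
    (hR : ∀ n ∈ [1, 3, 5, 7, 9, 11], (cycSets R n).ncard = 2)
    (rest L : List (ℕ × ℕ)) (h : search rest L (cyc L) = true) (hL : good L) (hr : good rest)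
    (hd : ∀ e ∈ rest, ¬ rel L e.1 e.2) (h1 : ∀ a b, rel L a b → R a b)
    (h2 : ∀ a b, R a b → rel L a b ∨ rel rest a b) :
    ∃ L', (∀ a b, R a b ↔ rel L' a b) ∧ isoAny L' = true := by
  have hlt : ∀ n ∈ [1, 3, 5, 7, 9, 11], n + 3 ≤ 14 := by decide
  induction rest generalizing L with
  | nil =>
    have he : ∀ a b, R a b ↔ rel L a b := fun a b =>
      ⟨fun h => (h2 a b h).resolve_right (by simp [rel]), h1 a b⟩
    refine ⟨L, he, ?_⟩
    have hRL : R = rel L := by ext a b; exact he a b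
    have hc : okEq (cyc L) = true := by
      rw [okEq_iff]
      intro n hn
      rw [← (cycSets_card L n (hlt n hn) hL).2, ← hRL, hR n hn]
    simpa [search, hc] using h
  | cons e rest ih =>
    obtain ⟨u, v⟩ := e
    simp only [search, Bool.and_eq_true] at h
    obtain ⟨ha, hb⟩ := h
    by_cases hu : R u v
    · have hL' : good ((u, v) :: L) := ⟨hd (u, v) (by simp), hL⟩
      have h1' : ∀ a b, rel ((u, v) :: L) a b → R a b := by
        intro a b hab
        simp only [rel, List.mem_cons, Prod.mk.injEq] at hab
        rcases hab with (⟨rfl, rfl⟩ | hab) | (⟨rfl, rfl⟩ | hab)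
        · exact hu
        · exact h1 _ _ (Or.inl hab)
        · exact hs _ _ hu
        · exact h1 _ _ (Or.inr hab)
      have hok : okLe (cyc ((u, v) :: L)) = true := by
        apply okLe_of
        intro n hn
        rw [← (cycSets_card _ n (hlt n hn) hL').2, ← hR n hn]
        refine Set.ncard_le_ncard (cycSets_mono h1' n) ?_
        apply Set.finite_of_ncard_ne_zero
        rw [hR n hn]; simp
      have hcyc : addLens L (u, v) (cyc L) = cyc ((u, v) :: L) := rfl
      rw [hcyc, hok, cond_true] at hb
      refine ih _ hb hL' hr.2 ?_ h1' ?_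
      · intro e he hrel
        have h3 := hd e (by simp [he])
        have h4 := hr.1
        obtain ⟨x, y⟩ := e
        simp only [rel, List.mem_cons, Prod.mk.injEq] at hrel h3 h4
        rcases hrel with (⟨rfl, rfl⟩ | hrel) | (⟨rfl, rfl⟩ | hrel)
        · exact h4 (Or.inl he)
        · exact h3 (Or.inl hrel)
        · exact h4 (Or.inr he)
        · exact h3 (Or.inr hrel)
      · intro a b hab
        have := h2 a b hab
        simp only [rel, List.mem_cons] at this ⊢
        tauto
    · refine ih L ha hL hr.2 (fun e he => hd e (by simp [he])) h1 ?_
      intro a b hab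
      have := h2 a b hab
      have hba := hs a b hab
      simp only [rel, List.mem_cons, Prod.mk.injEq] at this ⊢
      rcases this with this | (⟨rfl, rfl⟩ | this) | (⟨rfl, rfl⟩ | this)
      · exact Or.inl this
      · exact absurd hab hu
      · exact Or.inr (Or.inl this)
      · exact absurd hba hu
      · exact Or.inr (Or.inr this)

def goodB : List (ℕ × ℕ) → Bool
  | [] => true
  | e :: L => !(relB L e.1 e.2) && goodB L

lemma good_of {L} (h : goodB L = true) : good L := by
  induction L with
  | nil => trivial
  | cons e L ih =>
    simp only [goodB, Bool.and_eq_true, Bool.not_eq_true'] at h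
    refine ⟨?_, ih h.2⟩
    rw [← relB_iff, h.1]; simp

def tg (i : Fin 3) : SimpleGraph (Fin 14) where
  Adj a b := relB (tgt i) a b = true
  symm := ⟨fun a b h => by rw [relB_iff] at h ⊢; exact rel_symm h⟩
  loopless := ⟨by revert i; decide +kernel⟩

instance (i : Fin 3) : DecidableRel (tg i).Adj := fun a b =>
  inferInstanceAs (Decidable (relB (tgt i) a b = true))

lemma rel_lt {L : List (ℕ × ℕ)} (h : L.all (fun e => Nat.blt e.1 14 && Nat.blt e.2 14) = true)
    {a b} (hab : rel L a b) : a < 14 ∧ b < 14 := by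
  simp only [List.all_eq_true, Bool.and_eq_true, Nat.blt_eq] at h
  rcases hab with hab | hab
  · exact h _ hab
  · exact (h _ hab).symm

lemma tgt_lt (i : Fin 3) :
    (tgt i).all (fun e => Nat.blt e.1 14 && Nat.blt e.2 14) = true := by
  revert i; decide +kernel

lemma relOf_tg (i : Fin 3) : relOf Fin.val (tg i) = rel (tgt i) := by
  ext x y
  constructor
  · rintro ⟨a, b, rfl, rfl, h⟩
    exact (relB_iff _ _ _).1 h
  · intro h
    obtain ⟨hx, hy⟩ := rel_lt (tgt_lt i) h
    exact ⟨⟨x, hx⟩, ⟨y, hy⟩, rfl, rfl, (relB_iff _ _ _).2 h⟩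

lemma tg_count (i : Fin 3) : ∀ n ∈ [1, 3, 5, 7, 9, 11], cycleCount (tg i) (n + 3) = 2 := by
  have hlt : ∀ n ∈ [1, 3, 5, 7, 9, 11], n + 3 ≤ 14 := by decide
  intro n hn
  have hg : good (tgt i) := good_of (by revert i; decide +kernel)
  have hc : okEq (cyc (tgt i)) = true := by clear hg; revert i; decide +kernel
  rw [okEq_iff] at hc
  rw [cycleCount_eq Fin.val Fin.val_injective, relOf_tg, (cycSets_card _ n (hlt n hn) hg).2,
    hc n hn]

lemma range_k {k : ℕ} (h4 : 4 ≤ k) (h14 : k ≤ 14) (he : Even k) :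
    ∃ n ∈ [1, 3, 5, 7, 9, 11], k = n + 3 := by
  interval_cases k <;> first | (exact absurd he (by decide)) | (exact ⟨_, by decide, rfl⟩)

lemma tg_bip (i : Fin 3) : IsRBipancyclic (tg i) 2 := by
  refine ⟨⟨⟨fun a => ⟨a.val % 2, Nat.mod_lt _ (by norm_num)⟩, ?_⟩⟩, by simp; decide, by simp, ?_⟩
  · revert i; decide +kernel
  · intro k h4 h14 he
    rw [Fintype.card_fin] at h14
    obtain ⟨n, hn, rfl⟩ := range_k h4 h14 he
    exact tg_count i n hn

lemma tg_edges (i : Fin 3) : (tg i).edgeSet.ncard ≤ 19 := by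
  have hs : (tg i).edgeSet ⊆ ↑((tgt i).map
      (fun e => s((Fin.ofNat 14 e.1), (Fin.ofNat 14 e.2)))).toFinset := by
    intro s hs
    induction s with
    | h a b =>
      have h : rel (tgt i) a b := (relB_iff _ _ _).1 hs
      simp only [List.coe_toFinset, List.mem_map, Set.mem_ofPred_eq]
      rcases h with h | h
      · exact ⟨_, h, by simp⟩
      · exact ⟨_, h, by simp [Sym2.eq_swap]⟩
  refine (Set.ncard_le_ncard hs (Finset.finite_toSet _)).trans ?_
  rw [Set.ncard_coe_finset]
  refine (List.toFinset_card_le _).trans ?_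
  rw [List.length_map]
  clear hs
  revert i; decide +kernel

def dg (G : SimpleGraph (Fin 14)) [DecidableRel G.Adj] (v : Fin 14) : ℕ :=
  (Finset.univ.filter (fun w => G.Adj v w)).card

def inv3 (G : SimpleGraph (Fin 14)) [DecidableRel G.Adj] : ℕ :=
  (Finset.univ.filter (fun p : Fin 14 × Fin 14 =>
    G.Adj p.1 p.2 ∧ dg G p.1 = 3 ∧ dg G p.2 = 3)).card

lemma dg_iso (G G' : SimpleGraph (Fin 14)) [DecidableRel G.Adj] [DecidableRel G'.Adj]
    (φ : G ≃g G') (v : Fin 14) : dg G v = dg G' (φ v) := by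
  refine Finset.card_equiv φ.toEquiv ?_
  intro w
  simp [φ.map_adj_iff]

lemma inv3_iso (G G' : SimpleGraph (Fin 14)) [DecidableRel G.Adj] [DecidableRel G'.Adj]
    (φ : G ≃g G') : inv3 G = inv3 G' := by
  refine Finset.card_equiv (φ.toEquiv.prodCongr φ.toEquiv) ?_
  rintro ⟨a, b⟩
  simp [φ.map_adj_iff, dg_iso G G' φ]

lemma tg_inv (i j : Fin 3) (h : i ≠ j) : IsEmpty (tg i ≃g tg j) := by
  refine ⟨fun φ => ?_⟩
  have h1 := inv3_iso _ _ φ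
  revert h1
  revert i j
  have : ∀ i j : Fin 3, i ≠ j → inv3 (tg i) ≠ inv3 (tg j) := by decide +kernel
  exact fun i j h _ => this i j h

lemma isoB_sound {s : ℕ → ℕ} {L M : List (ℕ × ℕ)} (h : isoB s L M = true) :
    (∀ a b, rel L a b → rel M (s a) (s b)) ∧ (∀ a b, rel M a b → rel L (s a) (s b)) := by
  simp only [isoB, Bool.and_eq_true, List.all_eq_true, relB_iff] at h
  constructor
  · rintro a b (hab | hab)
    · exact h.1 _ hab
    · exact rel_symm (h.1 _ hab)
  · rintro a b (hab | hab)
    · exact h.2 _ hab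
    · exact rel_symm (h.2 _ hab)

lemma iso_of_isoB {W : Type*} (G : SimpleGraph W) (F : Fin 14 ≃ W) (s : ℕ → ℕ)
    (hs : ∀ x : Fin 14, s x < 14) (hss : ∀ x : Fin 14, s (s x) = x) (L : List (ℕ × ℕ))
    (hL : ∀ i j : Fin 14, G.Adj (F i) (F j) ↔ rel L i j) (t : Fin 3)
    (h : isoB s L (tgt t) = true) : Nonempty (G ≃g tg t) := by
  obtain ⟨h1, h2⟩ := isoB_sound h
  let σ : Fin 14 → Fin 14 := fun x => ⟨s x, hs x⟩
  have hσ : Function.Involutive σ := fun x => Fin.ext (hss x)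
  refine ⟨SimpleGraph.Iso.symm ⟨hσ.toPerm.trans F, ?_⟩⟩
  intro a b
  change G.Adj (F (σ a)) (F (σ b)) ↔ relB (tgt t) a b = true
  rw [hL, relB_iff]
  constructor
  · intro h
    have := h1 _ _ h
    simpa only [σ, hss] using this
  · intro h
    exact h2 _ _ h

lemma iso_of_isoAny {W : Type*} (G : SimpleGraph W) (F : Fin 14 ≃ W) (L : List (ℕ × ℕ))
    (hL : ∀ i j : Fin 14, G.Adj (F i) (F j) ↔ rel L i j)
    (h : isoAny L = true) : ∃ t, Nonempty (G ≃g tg t) := by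
  have i1 : ∀ x : Fin 14, id (x : ℕ) < 14 := fun x => x.2
  have i2 : ∀ x : Fin 14, id (id (x : ℕ)) = x := fun x => rfl
  have r1 : ∀ x : Fin 14, refl14 (x : ℕ) < 14 := by decide
  have r2 : ∀ x : Fin 14, refl14 (refl14 (x : ℕ)) = x := by decide
  simp only [isoAny, Bool.or_eq_true] at h
  rcases h with ((((h | h) | h) | h) | h) | h
  · exact ⟨0, iso_of_isoB G F id i1 i2 L hL 0 h⟩
  · exact ⟨1, iso_of_isoB G F id i1 i2 L hL 1 h⟩
  · exact ⟨2, iso_of_isoB G F id i1 i2 L hL 2 h⟩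
  · exact ⟨0, iso_of_isoB G F refl14 r1 r2 L hL 0 h⟩
  · exact ⟨1, iso_of_isoB G F refl14 r1 r2 L hL 1 h⟩
  · exact ⟨2, iso_of_isoB G F refl14 r1 r2 L hL 2 h⟩

theorem finish {W : Type*} (G : SimpleGraph W) (F : Fin 14 ≃ W)
    (hG : ∀ n ∈ [1, 3, 5, 7, 9, 11], cycleCount G (n + 3) = 2)
    (rest L : List (ℕ × ℕ)) (h : search rest L (cyc L) = true)
    (hgood : goodB L = true) (hgr : goodB rest = true)
    (hd : rest.all (fun e => !(relB L e.1 e.2)) = true)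
    (hlt : L.all (fun e => Nat.blt e.1 14 && Nat.blt e.2 14) = true)
    (h1 : ∀ i j : Fin 14, relB L i j = true → G.Adj (F i) (F j))
    (h2 : ∀ i j : Fin 14, G.Adj (F i) (F j) → relB (rest ++ L) i j = true) :
    ∃ t, Nonempty (G ≃g tg t) := by
  let f : W → ℕ := fun w => (F.symm w).val
  have hf : Function.Injective f := Fin.val_injective.comp F.symm.injective
  have hR : ∀ i j : Fin 14, relOf f G i j ↔ G.Adj (F i) (F j) := by
    intro i j
    constructor
    · rintro ⟨a, b, ha, hb, hab⟩
      have ha : F.symm a = i := Fin.ext ha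
      have hb : F.symm b = j := Fin.ext hb
      rw [← ha, ← hb]; simpa using hab
    · intro h
      exact ⟨F i, F j, by simp [f], by simp [f], h⟩
  have hRlt : ∀ a b, relOf f G a b → ∃ i j : Fin 14, a = i ∧ b = j := by
    rintro a b ⟨x, y, rfl, rfl, -⟩
    exact ⟨_, _, rfl, rfl⟩
  obtain ⟨L', hL', hiso⟩ := search_sound (relOf f G)
    (by rintro a b ⟨x, y, hx, hy, hxy⟩; exact ⟨y, x, hy, hx, hxy.symm⟩)
    (fun n hn => by rw [← cycleCount_eq f hf, hG n hn]) rest L h (good_of hgood) (good_of hgr)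
    (by
      intro e he
      simp only [List.all_eq_true, Bool.not_eq_true'] at hd
      rw [← relB_iff, hd e he]; simp)
    (by
      intro a b hab
      obtain ⟨ha, hb⟩ := rel_lt hlt hab
      have := h1 ⟨a, ha⟩ ⟨b, hb⟩ ((relB_iff _ _ _).2 hab)
      exact (hR ⟨a, ha⟩ ⟨b, hb⟩).2 this)
    (by
      intro a b hab
      obtain ⟨i, j, rfl, rfl⟩ := hRlt a b hab
      have := h2 i j ((hR i j).1 hab)
      rw [relB_iff] at this
      simp only [rel, List.mem_append] at this ⊢
      tauto)
  exact iso_of_isoAny G F L' (fun i j => by rw [← hR, hL']) hiso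

lemma exists_ham {W : Type*} [Fintype W] (G : SimpleGraph W) (hc : Fintype.card W = 14)
    (h : cycleCount G 14 = 2) : ∃ F : Fin 14 ≃ W, ∀ i, G.Adj (F i) (F (i + 1)) := by
  have : {H : G.Subgraph | Nonempty (H.coe ≃g cycleGraph 14)}.Nonempty := by
    apply Set.nonempty_of_ncard_ne_zero
    unfold cycleCount at h
    rw [h]; simp
  obtain ⟨H, ⟨e⟩⟩ := this
  have hi : Function.Injective (fun i => (e.symm i).val) :=
    Subtype.val_injective.comp e.symm.injective
  have hb : Function.Bijective (fun i => (e.symm i).val) := by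
    rw [Fintype.bijective_iff_injective_and_card]
    exact ⟨hi, by simp [hc]⟩
  refine ⟨Equiv.ofBijective _ hb, fun i => ?_⟩
  have : H.coe.Adj (e.symm i) (e.symm (i + 1)) := by
    rw [e.symm.map_adj_iff]; exact (cyc_adj (n := 11) i (i + 1)).2 (Or.inl rfl)
  exact H.adj_sub this

lemma parity {W : Type*} (G : SimpleGraph W) (hc : G.Colorable 2) (F : Fin 14 ≃ W)
    (hF : ∀ i, G.Adj (F i) (F (i + 1))) (i j : Fin 14) (h : G.Adj (F i) (F j)) :
    i.val % 2 ≠ j.val % 2 := by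
  obtain ⟨C⟩ := hc
  have h2 : ∀ a b : Fin 2, a ≠ b → b = a + 1 := by decide
  have key : ∀ m : ℕ, (hm : m < 14) →
      C (F ⟨m, hm⟩) = C (F 0) + Fin.ofNat 2 m := by
    intro m
    induction m with
    | zero => intro _; simp
    | succ m ih =>
      intro hm
      have h3 := hF ⟨m, by omega⟩
      have h4 : (⟨m, by omega⟩ + 1 : Fin 14) = ⟨m + 1, hm⟩ := by
        apply Fin.ext; simp [Fin.val_add]; omega
      rw [h4] at h3
      rw [h2 _ _ (C.valid h3), ih, add_assoc]
      congr 1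
      apply Fin.ext; simp [Fin.val_add]
  intro he
  apply C.valid h
  have hi := key i.val i.2
  have hj := key j.val j.2
  simp only [Fin.eta] at hi hj
  rw [hi, hj]
  congr 1
  apply Fin.ext
  simpa using he

theorem s1 : search chords5 ham (cyc ham) = true := by decide +kernel
theorem s2 : search (chords3 ++ chords5) ((0, 3) :: ham) (cyc ((0, 3) :: ham)) = true := by
  decide +kernel
theorem s3 : search (chords7 ++ (0, 3) :: chords3 ++ chords5) ((0, 7) :: ham)
    (cyc ((0, 7) :: ham)) = true := by
  decide +kernel

lemma cover1 : ∀ i j : Fin 14, i.val % 2 ≠ j.val % 2 →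
    relB (chords5 ++ ham) i j = true ∨ j = i + 7 ∨ j = i + 3 ∨ i = j + 3 := by decide +kernel
lemma cover2 : ∀ i j : Fin 14, i.val % 2 ≠ j.val % 2 →
    relB ((chords3 ++ chords5) ++ (0, 3) :: ham) i j = true ∨ j = i + 7 := by decide +kernel
lemma cover3 : ∀ i j : Fin 14, i.val % 2 ≠ j.val % 2 →
    relB ((chords7 ++ (0, 3) :: chords3 ++ chords5) ++ (0, 7) :: ham) i j = true := by
  decide +kernel
lemma ham1 : ∀ i j : Fin 14, relB ham i j = true → j = i + 1 ∨ i = j + 1 := by decide +kernel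
lemma ham2 : ∀ i j : Fin 14, relB ((0, 3) :: ham) i j = true → j = i + 1 ∨ i = j + 1 ∨
    (i = 0 ∧ j = 3) ∨ (i = 3 ∧ j = 0) := by decide +kernel
lemma ham3 : ∀ i j : Fin 14, relB ((0, 7) :: ham) i j = true → j = i + 1 ∨ i = j + 1 ∨
    (i = 0 ∧ j = 7) ∨ (i = 7 ∧ j = 0) := by decide +kernel

lemma rotate {W : Type*} (G : SimpleGraph W) (F : Fin 14 ≃ W)
    (hF : ∀ i, G.Adj (F i) (F (i + 1))) (c : Fin 14) :
    ∃ F' : Fin 14 ≃ W, (∀ i, G.Adj (F' i) (F' (i + 1))) ∧ ∀ i, F' i = F (i + c) := by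
  refine ⟨(Equiv.addRight c).trans F, fun i => ?_, fun i => rfl⟩
  have := hF (i + c)
  rw [add_right_comm] at this
  exact this

theorem complete {W : Type*} [Fintype W] (G : SimpleGraph W) (hc : Fintype.card W = 14)
    (hb : IsRBipancyclic G 2) : ∃ t, Nonempty (G ≃g tg t) := by
  obtain ⟨hcol, -, -, hk⟩ := hb
  rw [hc] at hk
  have hG : ∀ n ∈ [1, 3, 5, 7, 9, 11], cycleCount G (n + 3) = 2 := by
    intro n hn
    have h : ∀ n ∈ [1, 3, 5, 7, 9, 11], 4 ≤ n + 3 ∧ n + 3 ≤ 14 ∧ Even (n + 3) := by decide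
    obtain ⟨h1, h2, h3⟩ := h n hn
    exact hk _ h1 h2 h3
  obtain ⟨F, hF⟩ := exists_ham G hc (hG 11 (by decide))
  by_cases h7 : ∃ i, G.Adj (F i) (F (i + 7))
  · obtain ⟨c, hc7⟩ := h7
    obtain ⟨F', hF', hr⟩ := rotate G F hF c
    have h07 : G.Adj (F' 0) (F' 7) := by rw [hr, hr, zero_add, add_comm]; exact hc7
    refine finish G F' hG _ _ s3 (by decide +kernel) (by decide +kernel) (by decide +kernel)
      (by decide +kernel) ?_ (fun i j h => cover3 i j (parity G hcol F' hF' i j h))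
    intro i j hij
    rcases ham3 i j hij with rfl | rfl | ⟨rfl, rfl⟩ | ⟨rfl, rfl⟩
    · exact hF' _
    · exact (hF' _).symm
    · exact h07
    · exact h07.symm
  by_cases h3 : ∃ i, G.Adj (F i) (F (i + 3))
  · obtain ⟨c, hc3⟩ := h3
    obtain ⟨F', hF', hr⟩ := rotate G F hF c
    have h03 : G.Adj (F' 0) (F' 3) := by rw [hr, hr, zero_add, add_comm]; exact hc3
    refine finish G F' hG _ _ s2 (by decide +kernel) (by decide +kernel) (by decide +kernel)
      (by decide +kernel) ?_ (fun i j h =>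
        (cover2 i j (parity G hcol F' hF' i j h)).resolve_right ?_)
    · intro i j hij
      rcases ham2 i j hij with rfl | rfl | ⟨rfl, rfl⟩ | ⟨rfl, rfl⟩
      · exact hF' _
      · exact (hF' _).symm
      · exact h03
      · exact h03.symm
    · rintro rfl
      rw [hr, hr, add_right_comm] at h
      exact h7 ⟨_, h⟩
  · refine finish G F hG _ _ s1 (by decide +kernel) (by decide +kernel) (by decide +kernel)
      (by decide +kernel) ?_ (fun i j h =>
        (cover1 i j (parity G hcol F hF i j h)).resolve_right ?_)
    · intro i j hij
      rcases ham1 i j hij with rfl | rfl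
      · exact hF _
      · exact (hF _).symm
    · rintro (rfl | rfl | rfl)
      · exact h7 ⟨_, h⟩
      · exact h3 ⟨_, h⟩
      · exact h3 ⟨_, h.symm⟩

theorem two_bipancyclic_count_order_14 : ExactlyNUpToIso 2 3 14 19 := by
  exact ⟨tg, tg_inv, fun i => ⟨tg_bip i, tg_edges i⟩, fun _ _ G hc _ hb => complete G hc hb⟩
end

section
/- There are, up to isomorphism, exactly ten (2)-bipancyclic graphs on 22 vertices with at most 27 edges. -/
open SimpleGraph

namespace BP
open Finset

/-- Edge set of the closed walk traced by `f`. -/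
def cyc {V : Type*} {n : ℕ} (f : Fin (n+3) → V) : Set (Sym2 V) :=
  Set.range (fun i => s(f i, f (i+1)))

/-- Edge sets of cycles of length `n+3`. -/
def CycSet {V : Type*} (G : SimpleGraph V) (n : ℕ) : Set (Set (Sym2 V)) :=
  {D | ∃ f : Fin (n+3) → V, Function.Injective f ∧ (∀ i, G.Adj (f i) (f (i+1))) ∧ D = cyc f}

lemma cyc_adj {n : ℕ} (i : Fin (n+3)) : (cycleGraph (n+3)).Adj i (i+1) := by
  rw [cycleGraph_adj]; right; simp

lemma cyc_adj_iff {n : ℕ} (i j : Fin (n+3)) :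
    (cycleGraph (n+3)).Adj i j ↔ j = i + 1 ∨ i = j + 1 := by
  rw [cycleGraph_adj, or_comm]
  constructor
  · rintro (h | h)
    · left; rw [← h]; abel
    · right; rw [← h]; abel
  · rintro (h | h)
    · left; rw [h]; abel
    · right; rw [h]; abel

lemma copy_edgeSet {V : Type*} {G : SimpleGraph V} {n : ℕ} (φ : Copy (cycleGraph (n+3)) G) :
    φ.toSubgraph.edgeSet = cyc φ := by
  ext e
  induction e with | _ a b =>
  simp only [Subgraph.mem_edgeSet, cyc, Set.mem_range]
  simp only [Copy.toSubgraph, Subgraph.map_adj, Relation.Map, Subgraph.top_adj, cyc_adj_iff]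
  constructor
  · rintro ⟨i, j, h | h, rfl, rfl⟩
    · exact ⟨i, by subst h; rfl⟩
    · exact ⟨j, by subst h; exact Sym2.eq_swap⟩
  · rintro ⟨i, h⟩
    rcases Sym2.eq_iff.1 h with ⟨h1, h2⟩ | ⟨h1, h2⟩
    · exact ⟨i, i+1, Or.inl rfl, h1, h2⟩
    · exact ⟨i+1, i, Or.inr rfl, h2, h1⟩

lemma cycleCount_eq {V : Type*} (G : SimpleGraph V) (n : ℕ) :
    cycleCount G (n+3) = (CycSet G n).ncard := by
  have himg : CycSet G n = (fun H : G.Subgraph => H.edgeSet) ''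
      {H : G.Subgraph | Nonempty (H.coe ≃g cycleGraph (n+3))} := by
    ext D
    constructor
    · rintro ⟨f, hf, hadj, rfl⟩
      have hom : ∀ {i j}, (cycleGraph (n+3)).Adj i j → G.Adj (f i) (f j) := by
        intro i j h
        rcases (cyc_adj_iff i j).1 h with h | h
        · subst h; exact hadj i
        · subst h; exact (hadj j).symm
      let φ : Copy (cycleGraph (n+3)) G := ⟨⟨f, hom⟩, hf⟩
      exact ⟨φ.toSubgraph, ⟨φ.isoToSubgraph.symm⟩, copy_edgeSet φ⟩
    · rintro ⟨H, ⟨e⟩, rfl⟩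
      let φ : Copy (cycleGraph (n+3)) G := H.coeCopy.comp e.symm.toCopy
      refine ⟨φ, φ.injective, fun i => φ.toHom.map_adj (cyc_adj i), ?_⟩
      ext x
      induction x with | _ a b =>
      simp only [Subgraph.mem_edgeSet, cyc, Set.mem_range]
      constructor
      · intro h
        have h' : H.coe.Adj ⟨a, h.fst_mem⟩ ⟨b, h.snd_mem⟩ := h
        rcases (cyc_adj_iff _ _).1 (e.map_adj_iff.2 h') with h1 | h1
        · refine ⟨e ⟨a, h.fst_mem⟩, ?_⟩
          rw [← h1]; simp [φ, Subgraph.coeCopy]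
        · refine ⟨e ⟨b, h.snd_mem⟩, ?_⟩
          rw [← h1]; simp [φ, Subgraph.coeCopy, Sym2.eq_swap]
      · rintro ⟨i, hi⟩
        have h2 : H.coe.Adj (e.symm i) (e.symm (i+1)) := e.symm.map_adj_iff.2 (cyc_adj i)
        have h3 : H.Adj (φ i) (φ (i+1)) := h2
        rw [← Subgraph.mem_edgeSet] at h3 ⊢
        rw [← hi]; exact h3
  rw [himg, cycleCount, Set.ncard_image_of_injOn]
  rintro H ⟨e⟩ H' ⟨e'⟩ h
  have hadj : ∀ a b, H.Adj a b ↔ H'.Adj a b := fun a b => by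
    rw [← Subgraph.mem_edgeSet, ← Subgraph.mem_edgeSet]; simp only at h; rw [h]
  have key : ∀ K : G.Subgraph, (K.coe ≃g cycleGraph (n+3)) → ∀ v ∈ K.verts, ∃ w, K.Adj v w := by
    intro K e v hv
    have : K.coe.Adj (e.symm (e ⟨v, hv⟩)) (e.symm (e ⟨v, hv⟩ + 1)) :=
      e.symm.map_adj_iff.2 (cyc_adj _)
    rw [RelIso.symm_apply_apply] at this
    exact ⟨_, this⟩
  ext a
  · constructor
    · intro ha
      obtain ⟨w, hw⟩ := key H e a ha
      exact ((hadj _ _).1 hw).fst_mem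
    · intro ha
      obtain ⟨w, hw⟩ := key H' e' a ha
      exact ((hadj _ _).2 hw).fst_mem
  · exact hadj _ _

lemma CycSet_mono {V : Type*} {G G' : SimpleGraph V} (h : G ≤ G') (n : ℕ) :
    CycSet G n ⊆ CycSet G' n := by
  rintro D ⟨f, hf, ha, rfl⟩
  exact ⟨f, hf, fun i => h (ha i), rfl⟩

lemma cycleCount_mono {V : Type*} [Finite V] {G G' : SimpleGraph V} (h : G ≤ G') (n : ℕ) :
    cycleCount G (n+3) ≤ cycleCount G' (n+3) := by
  rw [cycleCount_eq, cycleCount_eq]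
  exact Set.ncard_le_ncard (CycSet_mono h n) (Set.toFinite _)

lemma CycSet_image {V W : Type*} {G : SimpleGraph V} {G' : SimpleGraph W} (e : G ≃g G') (n : ℕ) :
    (fun D => Sym2.map e '' D) '' CycSet G n ⊆ CycSet G' n := by
  rintro _ ⟨D, ⟨f, hf, ha, rfl⟩, rfl⟩
  refine ⟨e ∘ f, e.injective.comp hf, fun i => e.map_adj_iff.2 (ha i), ?_⟩
  simp only [cyc]
  rw [← Set.range_comp]
  rfl

lemma cycleCount_le_iso {V W : Type*} [Finite W] {G : SimpleGraph V} {G' : SimpleGraph W}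
    (e : G ≃g G') (n : ℕ) : cycleCount G (n+3) ≤ cycleCount G' (n+3) := by
  rw [cycleCount_eq, cycleCount_eq]
  have hinj : Function.Injective (fun D : Set (Sym2 V) => Sym2.map e '' D) :=
    Set.image_injective.2 (Sym2.map.injective e.injective)
  rw [← Set.ncard_image_of_injective (CycSet G n) hinj]
  exact Set.ncard_le_ncard (CycSet_image e n) (Set.toFinite _)

lemma cycleCount_iso {V W : Type*} [Finite V] [Finite W] {G : SimpleGraph V} {G' : SimpleGraph W}
    (e : G ≃g G') (n : ℕ) : cycleCount G (n+3) = cycleCount G' (n+3) :=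
  le_antisymm (cycleCount_le_iso e n) (cycleCount_le_iso e.symm n)

set_option linter.unusedSectionVars false
section partB
variable {V : Type*} [Fintype V] [DecidableEq V]

/-- Every vertex meets an even number of edges of `D`. -/
def EvenD (D : Finset (Sym2 V)) : Prop := ∀ v, Even (#{e ∈ D | v ∈ e})

lemma fin_ne_add_one {n : ℕ} (i : Fin (n+3)) : i ≠ i + 1 := by
  intro h
  have : (1 : Fin (n+3)) = 0 := by simpa using h.symm
  simp at this

lemma fin_ne_add_two {n : ℕ} (i : Fin (n+3)) : i ≠ i + 1 + 1 := by
  intro h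
  rw [add_assoc] at h
  have h2 : (1 + 1 : Fin (n+3)) = 0 := by simpa using h.symm
  have := congrArg Fin.val h2
  rw [Fin.val_add, Fin.val_one, Nat.mod_eq_of_lt (by omega)] at this
  simp at this

lemma cyc_inj {V : Type*} {n : ℕ} {f : Fin (n+3) → V} (hf : Function.Injective f) :
    Function.Injective (fun i => s(f i, f (i+1))) := by
  intro i j h
  rcases Sym2.eq_iff.1 h with ⟨h1, _⟩ | ⟨h1, h2⟩
  · exact hf h1
  · have a := hf h1
    have b := hf h2
    subst a
    exact absurd b.symm (fin_ne_add_two j)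

lemma cyc_ncard {V : Type*} {n : ℕ} {f : Fin (n+3) → V} (hf : Function.Injective f) :
    (cyc f).ncard = n + 3 := by
  rw [cyc, ← Set.image_univ, Set.ncard_image_of_injective _ (cyc_inj hf), Set.ncard_univ]
  simp

lemma cyc_mem {V : Type*} {n : ℕ} {f : Fin (n+3) → V} (hf : Function.Injective f) (i j : Fin (n+3)) :
    f (i+1) ∈ s(f j, f (j+1)) ↔ j = i + 1 ∨ j = i := by
  rw [Sym2.mem_iff, hf.eq_iff, hf.eq_iff]
  constructor
  · rintro (h | h)
    · exact Or.inl h.symm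
    · right; exact (add_right_cancel h).symm
  · rintro (h | h)
    · exact Or.inl h.symm
    · right; rw [h]

lemma cyc_even {n : ℕ} {f : Fin (n+3) → V} (hf : Function.Injective f) (D : Finset (Sym2 V))
    (hD : (D : Set (Sym2 V)) = cyc f) : EvenD D := by
  have hm : ∀ e, e ∈ D ↔ ∃ j, s(f j, f (j+1)) = e := fun e => by
    rw [← Finset.mem_coe, hD]; rfl
  intro v
  by_cases hv : ∃ j, f j = v
  · obtain ⟨j, rfl⟩ := hv
    obtain ⟨i, rfl⟩ : ∃ i, j = i + 1 := ⟨j - 1, by abel⟩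
    have : (D.filter fun e => f (i+1) ∈ e) = {s(f (i+1), f (i+1+1)), s(f i, f (i+1))} := by
      ext e
      rw [mem_filter, hm, mem_insert, mem_singleton]
      constructor
      · rintro ⟨⟨j, rfl⟩, h⟩
        rcases (cyc_mem hf i j).1 h with rfl | rfl
        · exact Or.inl rfl
        · exact Or.inr rfl
      · rintro (rfl | rfl)
        · exact ⟨⟨_, rfl⟩, by simp⟩
        · exact ⟨⟨_, rfl⟩, by simp⟩
    rw [this, card_pair]
    · exact even_two
    · intro h
      exact fin_ne_add_one i (cyc_inj hf h).symm
  · rw [Finset.filter_eq_empty_iff.2]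
    · simp
    · intro e he hve
      obtain ⟨j, rfl⟩ := (hm e).1 he
      rcases Sym2.mem_iff.1 hve with h | h
      · exact hv ⟨_, h.symm⟩
      · exact hv ⟨_, h.symm⟩

lemma cyc_min {n : ℕ} {f : Fin (n+3) → V} (hf : Function.Injective f) (D : Finset (Sym2 V))
    (hD : (D : Set (Sym2 V)) ⊆ cyc f) (hne : D.Nonempty) (he : EvenD D) :
    (D : Set (Sym2 V)) = cyc f := by
  have step : ∀ i, s(f i, f (i+1)) ∈ D ↔ s(f (i+1), f (i+1+1)) ∈ D := by
    intro i
    have hsub : ∀ e, e ∈ (D.filter fun e => f (i+1) ∈ e) →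
        e = s(f (i+1), f (i+1+1)) ∨ e = s(f i, f (i+1)) := by
      intro e he
      rw [mem_filter] at he
      obtain ⟨j, rfl⟩ := hD he.1
      rcases (cyc_mem hf i j).1 he.2 with rfl | rfl
      · exact Or.inl rfl
      · exact Or.inr rfl
    have hev := he (f (i+1))
    constructor
    · intro h1
      by_contra h2
      have : (D.filter fun e => f (i+1) ∈ e) = {s(f i, f (i+1))} := by
        ext e
        rw [mem_singleton]
        constructor
        · intro h
          rcases hsub e h with rfl | rfl
          · exact absurd (mem_filter.1 h).1 h2
          · rfl
        · rintro rfl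
          exact mem_filter.2 ⟨h1, by simp⟩
      rw [this, card_singleton] at hev
      exact absurd hev (by decide)
    · intro h1
      by_contra h2
      have : (D.filter fun e => f (i+1) ∈ e) = {s(f (i+1), f (i+1+1))} := by
        ext e
        rw [mem_singleton]
        constructor
        · intro h
          rcases hsub e h with rfl | rfl
          · rfl
          · exact absurd (mem_filter.1 h).1 h2
        · rintro rfl
          exact mem_filter.2 ⟨h1, by simp⟩
      rw [this, card_singleton] at hev
      exact absurd hev (by decide)
  refine Set.Subset.antisymm hD ?_
  obtain ⟨e, heD⟩ := hne
  obtain ⟨i, rfl⟩ := hD heD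
  have all : ∀ m : ℕ, ∀ h : m < n + 3, s(f (i + ⟨m, h⟩), f (i + ⟨m, h⟩ + 1)) ∈ D := by
    intro m
    induction m with
    | zero =>
      intro h
      have h0 : (⟨0, h⟩ : Fin (n+3)) = 0 := rfl
      rw [h0, add_zero]; exact heD
    | succ m ih =>
      intro h
      have h1 : (⟨m + 1, h⟩ : Fin (n+3)) = ⟨m, by omega⟩ + 1 := by
        apply Fin.ext
        rw [Fin.val_add, Fin.val_one, Nat.mod_eq_of_lt h]
      have := (step _).1 (ih (by omega))
      rw [h1, ← add_assoc]
      exact this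
  rintro _ ⟨j, rfl⟩
  have := all (j - i).val (j - i).isLt
  rw [Fin.eta, add_sub_cancel] at this
  exact this

lemma exists_unique_adj_of_acyclic {H : SimpleGraph V} (hH : H.IsAcyclic) {a b : V} (hab : H.Adj a b) :
    ∃ v, ∃! w, H.Adj v w := by
  classical
  let c := H.connectedComponentMk a
  have ht := hH.isTree_connectedComponent c
  have ha : a ∈ c.supp := rfl
  have hb : b ∈ c.supp := by
    show H.connectedComponentMk b = H.connectedComponentMk a
    exact (ConnectedComponent.connectedComponentMk_eq_of_adj hab).symm
  have : Nontrivial c := ⟨⟨⟨a, ha⟩, ⟨b, hb⟩, fun h => hab.ne (congrArg Subtype.val h)⟩⟩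
  obtain ⟨v, hv⟩ := ht.exists_vert_degree_one_of_nontrivial
  rw [degree_eq_one_iff_existsUnique_adj] at hv
  obtain ⟨w, hw, hu⟩ := hv
  refine ⟨v, w, hw, fun y hy => ?_⟩
  have hyc : y ∈ c.supp := by
    have : H.connectedComponentMk (v : V) = c := v.2
    show H.connectedComponentMk y = c
    rw [← this]
    exact (ConnectedComponent.connectedComponentMk_eq_of_adj hy).symm
  have := hu ⟨y, hyc⟩ hy
  rw [← this]

lemma exists_cyc (D : Finset (Sym2 V)) (hd : ∀ e ∈ D, ¬ e.IsDiag) (hne : D.Nonempty)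
    (he : EvenD D) : ∃ n, ∃ f : Fin (n+3) → V, Function.Injective f ∧ cyc f ⊆ (D : Set (Sym2 V)) := by
  let H : SimpleGraph V := fromEdgeSet (D : Set (Sym2 V))
  have hadj : ∀ a b, H.Adj a b ↔ s(a, b) ∈ D := by
    intro a b
    simp only [H, fromEdgeSet_adj, Finset.mem_coe, ne_eq, and_iff_left_iff_imp]
    intro h hab
    exact hd _ h (by simpa using hab)
  have hnac : ¬ H.IsAcyclic := by
    intro hac
    obtain ⟨e, heD⟩ := hne
    induction e with | _ a b =>
    obtain ⟨v, w, hw, hu⟩ := exists_unique_adj_of_acyclic hac ((hadj a b).2 heD)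
    have : (D.filter fun e => v ∈ e) = {s(v, w)} := by
      ext e
      rw [mem_filter, mem_singleton]
      constructor
      · rintro ⟨h1, h2⟩
        obtain ⟨y, rfl⟩ := h2
        rw [hu y ((hadj _ _).2 h1)]
      · rintro rfl
        exact ⟨(hadj _ _).1 hw, by simp⟩
    have hev := he v
    rw [this, card_singleton] at hev
    exact absurd hev (by decide)
  rw [isAcyclic_iff_free_cycleGraph] at hnac
  push Not at hnac
  obtain ⟨k, hk, hc⟩ := hnac
  obtain ⟨n, rfl⟩ : ∃ n, k = n + 3 := ⟨k - 3, by omega⟩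
  obtain ⟨φ⟩ := hc
  refine ⟨n, φ, φ.injective, ?_⟩
  rintro _ ⟨i, rfl⟩
  exact (hadj _ _).1 (φ.toHom.map_adj (cyc_adj i))

/-- Minimal nonempty even edge sets. -/
def MinD (D : Finset (Sym2 V)) : Prop :=
  D.Nonempty ∧ EvenD D ∧ ∀ B ⊆ D, B.Nonempty → EvenD B → B = D

lemma mem_CycSet_iff (G : SimpleGraph V) (n : ℕ) (D : Finset (Sym2 V)) :
    (D : Set (Sym2 V)) ∈ CycSet G n ↔ (D : Set (Sym2 V)) ⊆ G.edgeSet ∧ MinD D ∧ #D = n + 3 := by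
  constructor
  · rintro ⟨f, hf, ha, hD⟩
    refine ⟨?_, ⟨?_, cyc_even hf D hD, ?_⟩, ?_⟩
    · rw [hD]; rintro _ ⟨i, rfl⟩; exact ha i
    · rw [← Finset.coe_nonempty, hD]; exact ⟨_, 0, rfl⟩
    · intro B hB hne hev
      have h1 : (B : Set (Sym2 V)) ⊆ cyc f := by rw [← hD]; exact_mod_cast hB
      have := cyc_min hf B h1 hne hev
      rw [← hD] at this
      exact_mod_cast this
    · rw [← Set.ncard_coe_finset, hD, cyc_ncard hf]
  · rintro ⟨hG, ⟨hne, hev, hmin⟩, hc⟩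
    obtain ⟨m, f, hf, hsub⟩ := exists_cyc D (fun e he => G.not_isDiag_of_mem_edgeSet (hG he)) hne hev
    obtain ⟨B, hB⟩ : ∃ B : Finset (Sym2 V), (B : Set (Sym2 V)) = cyc f :=
      ⟨(Set.toFinite (cyc f)).toFinset, by simp⟩
    have hBD : B = D := by
      apply hmin
      · rw [← Finset.coe_subset, hB]; exact hsub
      · rw [← Finset.coe_nonempty, hB]; exact ⟨_, 0, rfl⟩
      · exact cyc_even hf B hB
    subst hBD
    have hm : m = n := by
      have := cyc_ncard hf
      rw [← hB, Set.ncard_coe_finset] at this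
      omega
    subst hm
    refine ⟨f, hf, fun i => ?_, hB⟩
    rw [← mem_edgeSet]
    apply hG
    rw [hB]
    exact ⟨i, rfl⟩

end partB


/-- The vertex `i mod 22`. -/
def pt (i : ℕ) : Fin 22 := Fin.ofNat 22 i

/-- End points of the edge of index `i`: `0..21` is the Hamilton cycle, then chords. -/
def ends : List ℕ → ℕ → Fin 22 × Fin 22
  | [], i => (pt i, pt (i+1))
  | c :: T, i => if i = 22 + T.length then (pt (c / 32), pt (c % 32)) else ends T i

def ed (T : List ℕ) (i : ℕ) : Sym2 (Fin 22) := s((ends T i).1, (ends T i).2)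

def chE (c : ℕ) : Sym2 (Fin 22) := s(pt (c / 32), pt (c % 32))

def hcE (i : ℕ) : Sym2 (Fin 22) := s(pt i, pt (i+1))

/-- Valid chord codes. -/
def VC (c : ℕ) : Prop := c % 32 < 22 ∧ c / 32 + 1 < c % 32 ∧ c % 32 < c / 32 + 21

lemma pt_val (i : ℕ) : (pt i).val = i % 22 := rfl

lemma pt_eq_iff (i j : ℕ) : pt i = pt j ↔ i % 22 = j % 22 := by
  rw [Fin.ext_iff, pt_val, pt_val]

lemma pt_fin (v : Fin 22) : pt v.val = v := by
  apply Fin.ext; rw [pt_val]; omega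

lemma chE_inj {c c' : ℕ} (h : VC c) (h' : VC c') (he : chE c = chE c') : c = c' := by
  unfold chE VC at *
  rw [Sym2.eq_iff] at he
  simp only [pt_eq_iff] at he
  rw [Nat.mod_eq_of_lt (by omega : c / 32 < 22), Nat.mod_eq_of_lt (by omega : c' / 32 < 22),
    Nat.mod_eq_of_lt h.1, Nat.mod_eq_of_lt h'.1] at he
  omega

lemma hcE_inj {i j : ℕ} (h : i < 22) (h' : j < 22) (he : hcE i = hcE j) : i = j := by
  unfold hcE at *
  rw [Sym2.eq_iff] at he
  simp only [pt_eq_iff] at he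
  omega

lemma chE_ne_hcE {c i : ℕ} (h : VC c) : chE c ≠ hcE i := by
  intro he
  unfold chE hcE VC at *
  rw [Sym2.eq_iff] at he
  simp only [pt_eq_iff] at he
  omega

lemma chE_not_diag {c : ℕ} (h : VC c) : ¬ (chE c).IsDiag := by
  unfold chE VC at *
  rw [Sym2.mk_isDiag_iff, pt_eq_iff]
  omega

lemma hcE_not_diag (i : ℕ) : ¬ (hcE i).IsDiag := by
  unfold hcE
  rw [Sym2.mk_isDiag_iff, pt_eq_iff]
  omega

lemma ends_cons_lt {c i : ℕ} {T : List ℕ} (h : i < 22 + T.length) : ends (c :: T) i = ends T i := by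
  rw [ends, if_neg (by omega)]

lemma ed_cons_lt {c i : ℕ} {T : List ℕ} (h : i < 22 + T.length) : ed (c :: T) i = ed T i := by
  rw [ed, ed, ends_cons_lt h]

lemma ed_cons_top {c : ℕ} {T : List ℕ} : ed (c :: T) (22 + T.length) = chE c := by
  rw [ed, ends, if_pos rfl]; rfl

lemma ed_nil (i : ℕ) : ed [] i = hcE i := rfl

lemma ed_cases (T : List ℕ) (i : ℕ) (hi : i < 22 + T.length) :
    (i < 22 ∧ ed T i = hcE i) ∨ ∃ c ∈ T, ed T i = chE c := by
  induction T with
  | nil => left; exact ⟨by simpa using hi, rfl⟩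
  | cons c T ih =>
    by_cases h : i = 22 + T.length
    · right; exact ⟨c, by simp, by rw [h, ed_cons_top]⟩
    · have h' : i < 22 + T.length := by simp at hi; omega
      rw [ed_cons_lt h']
      rcases ih h' with h1 | ⟨c', hc, h2⟩
      · exact Or.inl h1
      · exact Or.inr ⟨c', by simp [hc], h2⟩

lemma ed_hc (T : List ℕ) (i : ℕ) (hi : i < 22) : ed T i = hcE i := by
  induction T with
  | nil => rfl
  | cons c T ih => rw [ed_cons_lt (by omega), ih]

lemma ed_ch (T : List ℕ) (c : ℕ) (hc : c ∈ T) : ∃ i < 22 + T.length, ed T i = chE c := by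
  induction T with
  | nil => simp at hc
  | cons d T ih =>
    rcases List.mem_cons.1 hc with rfl | h
    · exact ⟨22 + T.length, by simp, ed_cons_top⟩
    · obtain ⟨i, hi, h⟩ := ih h
      exact ⟨i, by simp; omega, by rw [ed_cons_lt hi, h]⟩

lemma ed_injOn (T : List ℕ) (hT : T.Nodup) (hv : ∀ c ∈ T, VC c) :
    ∀ i < 22 + T.length, ∀ j < 22 + T.length, ed T i = ed T j → i = j := by
  induction T with
  | nil => intro i hi j hj h; exact hcE_inj (by simpa using hi) (by simpa using hj) h
  | cons c T ih =>
    have key : ∀ i < 22 + T.length, ed T i ≠ chE c := by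
      intro i hi h
      rcases ed_cases T i hi with ⟨_, h1⟩ | ⟨c', hc', h1⟩
      · rw [h1] at h; exact chE_ne_hcE (hv c (by simp)) h.symm
      · rw [h1] at h
        have := chE_inj (hv c' (by simp [hc'])) (hv c (by simp)) h
        subst this
        exact (List.nodup_cons.1 hT).1 hc'
    intro i hi j hj h
    simp only [List.length_cons] at hi hj
    by_cases h1 : i = 22 + T.length <;> by_cases h2 : j = 22 + T.length
    · omega
    · subst h1
      rw [ed_cons_top, ed_cons_lt (by omega)] at h
      exact absurd h.symm (key j (by omega))
    · subst h2
      rw [ed_cons_top, ed_cons_lt (by omega)] at h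
      exact absurd h (key i (by omega))
    · rw [ed_cons_lt (by omega), ed_cons_lt (by omega)] at h
      exact ih (List.nodup_cons.1 hT).2 (fun c hc => hv c (by simp [hc])) i (by omega) j (by omega) h

/-- The graph with Hamilton cycle plus the chords coded by `S`. -/
def GS (S : Finset ℕ) : SimpleGraph (Fin 22) :=
  fromEdgeSet ({e | ∃ i < 22, e = hcE i} ∪ {e | ∃ c ∈ S, e = chE c})

lemma GS_edgeSet (S : Finset ℕ) (hv : ∀ c ∈ S, VC c) :
    (GS S).edgeSet = {e | ∃ i < 22, e = hcE i} ∪ {e | ∃ c ∈ S, e = chE c} := by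
  rw [GS, edgeSet_fromEdgeSet, sdiff_eq_left, Set.disjoint_left]
  rintro e (⟨i, _, rfl⟩ | ⟨c, hc, rfl⟩) h
  · exact hcE_not_diag i h
  · exact chE_not_diag (hv c hc) h

lemma GS_mono {S S' : Finset ℕ} (h : S ⊆ S') : GS S ≤ GS S' := by
  apply fromEdgeSet_mono
  apply Set.union_subset_union_right
  rintro e ⟨c, hc, rfl⟩
  exact ⟨c, h hc, rfl⟩

lemma GS_edgeSet_ed (T : List ℕ) (hv : ∀ c ∈ T, VC c) :
    (GS T.toFinset).edgeSet = ed T '' (range (22 + T.length) : Finset ℕ) := by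
  rw [GS_edgeSet _ (by simpa using hv)]
  ext e
  constructor
  · rintro (⟨i, hi, rfl⟩ | ⟨c, hc, rfl⟩)
    · exact ⟨i, by simp; omega, ed_hc T i hi⟩
    · obtain ⟨i, hi, h⟩ := ed_ch T c (by simpa using hc)
      exact ⟨i, by simpa using hi, h⟩
  · rintro ⟨i, hi, rfl⟩
    rcases ed_cases T i (by simpa using hi) with ⟨h, h1⟩ | ⟨c, hc, h1⟩
    · left; exact ⟨i, h, h1⟩
    · right; exact ⟨c, by simpa using hc, h1⟩

/-- incidence of edge index `i` with `v`, mod 2 -/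
def inc (T : List ℕ) (i : ℕ) (v : Fin 22) : ZMod 2 :=
  (if (ends T i).1 = v then 1 else 0) + (if (ends T i).2 = v then 1 else 0)

/-- index sets of even edge sets -/
def EvI (T : List ℕ) (A : Finset ℕ) : Prop :=
  A ⊆ range (22 + T.length) ∧ ∀ v, ∑ i ∈ A, inc T i v = 0

def MinI (T : List ℕ) (A : Finset ℕ) : Prop :=
  A.Nonempty ∧ EvI T A ∧ ∀ B ⊆ A, B.Nonempty → EvI T B → B = A

lemma inc_eq (T : List ℕ) (i : ℕ) (v : Fin 22) (h : ¬ (ed T i).IsDiag) :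
    inc T i v = if v ∈ ed T i then 1 else 0 := by
  unfold inc ed at *
  rw [Sym2.mk_isDiag_iff] at h
  simp only [Sym2.mem_iff]
  by_cases h1 : (ends T i).1 = v <;> by_cases h2 : (ends T i).2 = v
  · exact absurd (h1.trans h2.symm) h
  · simp [h1, h2]
  · simp [h1, h2]
  · rw [if_neg h1, if_neg h2, if_neg]
    · simp
    · rintro (h | h)
      · exact h1 h.symm
      · exact h2 h.symm

lemma ed_not_diag (T : List ℕ) (hv : ∀ c ∈ T, VC c) (i : ℕ) (hi : i < 22 + T.length) :
    ¬ (ed T i).IsDiag := by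
  rcases ed_cases T i hi with ⟨_, h1⟩ | ⟨c, hc, h1⟩
  · rw [h1]; exact hcE_not_diag i
  · rw [h1]; exact chE_not_diag (hv c hc)


lemma ed_injOn_set (T : List ℕ) (hT : T.Nodup) (hv : ∀ c ∈ T, VC c)
    : Set.InjOn (ed T) (range (22 + T.length) : Finset ℕ) := by
  intro i hi j hj h
  exact ed_injOn T hT hv i (by simpa using hi) j (by simpa using hj) h

lemma evenD_iff (T : List ℕ) (hT : T.Nodup) (hv : ∀ c ∈ T, VC c)
    (A : Finset ℕ) (hA : A ⊆ range (22 + T.length)) :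
    EvenD (A.image (ed T)) ↔ EvI T A := by
  have hinj : Set.InjOn (ed T) A := (ed_injOn_set T hT hv).mono (by exact_mod_cast hA)
  have key : ∀ v, ∑ i ∈ A, inc T i v = ((#{e ∈ A.image (ed T) | v ∈ e} : ℕ) : ZMod 2) := by
    intro v
    rw [Finset.card_filter, Nat.cast_sum, Finset.sum_image hinj]
    apply Finset.sum_congr rfl
    intro i hi
    rw [inc_eq T i v (ed_not_diag T hv i (by simpa using hA hi))]
    split_ifs <;> simp
  unfold EvenD EvI
  simp only [hA, true_and, key]
  apply forall_congr'
  intro v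
  rw [ZMod.natCast_eq_zero_iff_even]

lemma minD_iff (T : List ℕ) (hT : T.Nodup) (hv : ∀ c ∈ T, VC c)
    (A : Finset ℕ) (hA : A ⊆ range (22 + T.length)) :
    MinD (A.image (ed T)) ↔ MinI T A := by
  unfold MinD MinI
  rw [evenD_iff T hT hv A hA, Finset.image_nonempty]
  refine and_congr_right fun _ => and_congr_right fun _ => ?_
  constructor
  · intro h B hB hne hev
    have h1 := h (B.image (ed T)) (Finset.image_subset_image hB) (by simpa using hne)
      ((evenD_iff T hT hv B (hB.trans hA)).2 hev)
    apply Finset.Subset.antisymm hB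
    intro i hi
    have h2 : ed T i ∈ B.image (ed T) := by rw [h1]; exact mem_image_of_mem _ hi
    obtain ⟨j, hj, hji⟩ := mem_image.1 h2
    have := ed_injOn T hT hv j (by simpa using hA (hB hj)) i (by simpa using hA hi) hji
    rwa [← this]
  · intro h B hB hne hev
    obtain ⟨B', hB', rfl⟩ := Finset.subset_image_iff.1 hB
    rw [h B' hB' (by simpa using hne) ((evenD_iff T hT hv B' (hB'.trans hA)).1 hev)]

lemma cycleCount_GS (T : List ℕ) (hT : T.Nodup) (hv : ∀ c ∈ T, VC c)
    (C : List (Finset ℕ)) (hC : C.Nodup) (hmem : ∀ A, A ∈ C ↔ MinI T A) (n : ℕ) :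
    cycleCount (GS T.toFinset) (n+3) = C.countP (fun A => #A == n + 3) := by
  classical
  rw [cycleCount_eq]
  have hsub : ∀ A ∈ C, A ⊆ range (22 + T.length) := fun A hA => ((hmem A).1 hA).2.1.1
  have himg : CycSet (GS T.toFinset) n = (fun A : Finset ℕ => ((A.image (ed T) : Finset (Sym2 (Fin 22))) : Set (Sym2 (Fin 22)))) ''
      ((C.filter (fun A => #A == n + 3)).toFinset : Set (Finset ℕ)) := by
    ext D
    obtain ⟨D, rfl⟩ : ∃ D' : Finset (Sym2 (Fin 22)), (D' : Set (Sym2 (Fin 22))) = D :=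
      ⟨(Set.toFinite D).toFinset, by simp⟩
    rw [mem_CycSet_iff, GS_edgeSet_ed T hv]
    constructor
    · rintro ⟨h1, h2, h3⟩
      obtain ⟨A, hA, rfl⟩ := Finset.subset_set_image_iff.1 h1
      have hA' : A ⊆ range (22 + T.length) := by exact_mod_cast hA
      refine ⟨A, ?_, rfl⟩
      rw [Finset.card_image_of_injOn ((ed_injOn_set T hT hv).mono hA)] at h3
      simp only [List.coe_toFinset, List.mem_filter, Set.mem_ofPred_eq, beq_iff_eq]
      exact ⟨(hmem A).2 ((minD_iff T hT hv A hA').1 h2), h3⟩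
    · rintro ⟨A, hA, h⟩
      simp only [Finset.coe_inj] at h
      subst h
      simp only [List.coe_toFinset, List.mem_filter, Set.mem_ofPred_eq, beq_iff_eq] at hA
      have hA' := hsub A hA.1
      refine ⟨?_, (minD_iff T hT hv A hA').2 ((hmem A).1 hA.1), ?_⟩
      · rw [Finset.coe_image]; exact Set.image_mono (by exact_mod_cast hA')
      · rw [Finset.card_image_of_injOn ((ed_injOn_set T hT hv).mono (by exact_mod_cast hA'))]
        exact hA.2
  rw [himg, Set.ncard_image_of_injOn, Set.ncard_coe_finset, List.toFinset_card_of_nodup (hC.filter _),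
    List.countP_eq_length_filter]
  intro A hA B hB h
  simp only [List.coe_toFinset, List.mem_filter, Set.mem_ofPred_eq] at hA hB
  simp only [Finset.coe_inj] at h
  have hI := ed_injOn_set T hT hv
  ext i
  constructor
  · intro hi
    have h2 : ed T i ∈ B.image (ed T) := by rw [← h]; exact mem_image_of_mem _ hi
    obtain ⟨j, hj, hji⟩ := mem_image.1 h2
    rw [← hI (hsub B hB.1 hj) (hsub A hA.1 hi) hji]; exact hj
  · intro hi
    have h2 : ed T i ∈ A.image (ed T) := by rw [h]; exact mem_image_of_mem _ hi
    obtain ⟨j, hj, hji⟩ := mem_image.1 h2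
    rw [← hI (hsub A hA.1 hj) (hsub B hB.1 hi) hji]; exact hj



open scoped symmDiff

lemma sum_symmDiff_two (g : ℕ → ZMod 2) (A B : Finset ℕ) :
    ∑ i ∈ A ∆ B, g i = ∑ i ∈ A, g i + ∑ i ∈ B, g i := by
  have h1 : A ∆ B = (A \ B) ∪ (B \ A) := rfl
  have hd : Disjoint (A \ B) (B \ A) := by
    rw [Finset.disjoint_left]; intro i; simp only [mem_sdiff]; tauto
  have split : ∀ A B : Finset ℕ, ∑ i ∈ A, g i = ∑ i ∈ A \ B, g i + ∑ i ∈ A ∩ B, g i := by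
    intro A B
    rw [← Finset.sum_union (Finset.disjoint_sdiff_inter A B), Finset.sdiff_union_inter]
  have hA := split A B
  have hB := split B A
  rw [Finset.inter_comm] at hB
  rw [h1, Finset.sum_union hd, hA, hB]
  have : ∀ x : ZMod 2, x + x = 0 := CharTwo.add_self_eq_zero
  linear_combination -(this (∑ i ∈ A ∩ B, g i))

lemma EvI_symmDiff {T : List ℕ} {A B : Finset ℕ} (hA : EvI T A) (hB : EvI T B) : EvI T (A ∆ B) := by
  refine ⟨?_, fun v => ?_⟩
  · intro i hi
    rcases Finset.mem_symmDiff.1 hi with h | h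
    · exact hA.1 h.1
    · exact hB.1 h.1
  · rw [sum_symmDiff_two, hA.2, hB.2, add_zero]

lemma EvI_cons_iff {c : ℕ} {T : List ℕ} {A : Finset ℕ} (hA : A ⊆ range (22 + T.length)) :
    EvI (c :: T) A ↔ EvI T A := by
  unfold EvI
  have h1 : A ⊆ range (22 + (c :: T).length) := by
    refine hA.trans (Finset.range_subset_range.2 ?_); simp
  have h2 : ∀ v, ∑ i ∈ A, inc (c :: T) i v = ∑ i ∈ A, inc T i v := by
    intro v
    apply Finset.sum_congr rfl
    intro i hi
    unfold inc
    rw [ends_cons_lt (by simpa using hA hi)]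
  simp only [hA, h1, h2, true_and]

/-- fundamental cycle of a chord -/
def FF (n c : ℕ) : Finset ℕ := insert (22 + n) (Ico (c / 32) (c % 32))

lemma ends_hc (T : List ℕ) (i : ℕ) (hi : i < 22) : ends T i = (pt i, pt (i+1)) := by
  induction T with
  | nil => rfl
  | cons c T ih => rw [ends_cons_lt (by omega), ih]

lemma tele (g : ℕ → ZMod 2) (a b : ℕ) (h : a ≤ b) :
    ∑ i ∈ Ico a b, (g i + g (i+1)) = g a + g b := by
  have two : ∀ x : ZMod 2, x + x = 0 := CharTwo.add_self_eq_zero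
  induction b, h using Nat.le_induction with
  | base => simp [two]
  | succ b hb ih =>
    rw [Finset.sum_Ico_succ_top hb, ih]
    linear_combination two (g b)

lemma EvI_FF {c : ℕ} (hc : VC c) (T : List ℕ) : EvI (c :: T) (FF T.length c) := by
  have two : ∀ x : ZMod 2, x + x = 0 := CharTwo.add_self_eq_zero
  unfold VC at hc
  refine ⟨?_, fun v => ?_⟩
  · intro i hi
    rw [FF, mem_insert, mem_Ico] at hi
    simp only [mem_range, List.length_cons]
    omega
  · rw [FF, Finset.sum_insert (by rw [mem_Ico]; omega)]
    have h1 : ∑ i ∈ Ico (c / 32) (c % 32), inc (c :: T) i v =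
        ∑ i ∈ Ico (c / 32) (c % 32), ((fun i => if pt i = v then (1 : ZMod 2) else 0) i +
          (fun i => if pt i = v then (1 : ZMod 2) else 0) (i+1)) := by
      apply Finset.sum_congr rfl
      intro i hi
      rw [mem_Ico] at hi
      unfold inc
      rw [ends_hc _ _ (by omega)]
    rw [h1, tele _ _ _ (by omega)]
    unfold inc
    rw [ends, if_pos rfl]
    exact two _

lemma top_mem_FF (n c : ℕ) : 22 + n ∈ FF n c := by simp [FF]

lemma top_not_mem {T : List ℕ} {e : Finset ℕ} (he : EvI T e) : 22 + T.length ∉ e := by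
  intro h
  have := he.1 h
  simp at this

lemma top_mem_new {T : List ℕ} {e : Finset ℕ} (c : ℕ) (he : EvI T e) :
    22 + T.length ∈ e ∆ FF T.length c :=
  Finset.mem_symmDiff.2 (Or.inr ⟨top_mem_FF _ _, top_not_mem he⟩)

lemma EvI_lift {T : List ℕ} {e : Finset ℕ} (c : ℕ) (he : EvI T e) : EvI (c :: T) e :=
  (EvI_cons_iff he.1).2 he

lemma EvI_drop {T : List ℕ} {e : Finset ℕ} {c : ℕ} (he : EvI (c :: T) e)
    (ht : 22 + T.length ∉ e) : EvI T e := by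
  refine (EvI_cons_iff ?_).1 he
  intro i hi
  have := he.1 hi
  simp only [mem_range, List.length_cons] at this ⊢
  have h2 : i ≠ 22 + T.length := fun h => ht (h ▸ hi)
  omega

lemma EvI_cons {c : ℕ} (hc : VC c) (T : List ℕ) (A : Finset ℕ) :
    EvI (c :: T) A ↔ EvI T A ∨ ∃ e, EvI T e ∧ A = e ∆ FF T.length c := by
  constructor
  · intro h
    by_cases ht : 22 + T.length ∈ A
    · right
      refine ⟨A ∆ FF T.length c, ?_, ?_⟩
      · apply EvI_drop (EvI_symmDiff h (EvI_FF hc T))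
        rw [Finset.mem_symmDiff]
        have := top_mem_FF T.length c
        tauto
      · rw [symmDiff_symmDiff_cancel_right]
    · left; exact EvI_drop h ht
  · rintro (h | ⟨e, he, rfl⟩)
    · exact EvI_lift c h
    · exact EvI_symmDiff (EvI_lift c he) (EvI_FF hc T)

lemma EvI_nil (A : Finset ℕ) : EvI [] A ↔ A = ∅ ∨ A = range 22 := by
  have one : (1 : ZMod 2) ≠ 0 := by decide
  constructor
  · rintro ⟨hA, h⟩
    have hA : A ⊆ range 22 := by simpa using hA
    have step : ∀ i, i + 1 < 22 → (i ∈ A ↔ i + 1 ∈ A) := by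
      intro i hi
      have h1 := h (pt (i+1))
      have h2 : ∑ j ∈ A, inc [] j (pt (i+1)) =
          ∑ j ∈ A, ((if j = i + 1 then (1 : ZMod 2) else 0) + (if j = i then (1 : ZMod 2) else 0)) := by
        apply Finset.sum_congr rfl
        intro j hj
        have hj : j < 22 := by simpa using hA hj
        unfold inc ends
        simp only [pt_eq_iff]
        congr 1
        · congr 1; apply propext; omega
        · congr 1; apply propext; omega
      rw [h2, Finset.sum_add_distrib, Finset.sum_ite_eq', Finset.sum_ite_eq'] at h1
      by_cases a : i ∈ A <;> by_cases b : i + 1 ∈ A <;> simp [a, b] at h1 ⊢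
    have all : ∀ i, i < 22 → (0 ∈ A ↔ i ∈ A) := by
      intro i
      induction i with
      | zero => simp
      | succ i ih =>
        intro hi
        rw [ih (by omega), step i hi]
    by_cases h0 : 0 ∈ A
    · right
      apply Finset.Subset.antisymm hA
      intro i hi
      exact (all i (by simpa using hi)).1 h0
    · left
      rw [Finset.eq_empty_iff_forall_notMem]
      intro i hi
      exact h0 ((all i (by simpa using hA hi)).2 hi)
  · rintro (rfl | rfl)
    · exact ⟨by simp, by simp⟩
    · refine ⟨by simp, ?_⟩
      unfold inc ends
      decide

lemma exists_min {T : List ℕ} {A : Finset ℕ} (hA : EvI T A) (hne : A.Nonempty) :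
    ∃ B ⊆ A, MinI T B := by
  induction A using Finset.strongInduction with
  | H A ih =>
    by_cases h : ∃ B ⊆ A, B.Nonempty ∧ EvI T B ∧ B ≠ A
    · obtain ⟨B, hB, hBne, hBe, hBA⟩ := h
      obtain ⟨B', h1, h2⟩ := ih B (Finset.ssubset_iff_subset_ne.2 ⟨hB, hBA⟩) hBe hBne
      exact ⟨B', h1.trans hB, h2⟩
    · push Not at h
      exact ⟨A, Finset.Subset.refl _, hne, hA, h⟩

lemma MinI_lift {T : List ℕ} {A : Finset ℕ} (c : ℕ) (hA : MinI T A) : MinI (c :: T) A := by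
  obtain ⟨hne, he, hm⟩ := hA
  refine ⟨hne, EvI_lift c he, fun B hB hBne hBe => hm B hB hBne ?_⟩
  exact EvI_drop hBe fun h => top_not_mem he (hB h)

lemma MinI_drop {T : List ℕ} {A : Finset ℕ} {c : ℕ} (hA : MinI (c :: T) A)
    (he : EvI T A) : MinI T A :=
  ⟨hA.1, he, fun B hB hBne hBe => hA.2.2 B hB hBne (EvI_lift c hBe)⟩

lemma MinI_cons {c : ℕ} (hc : VC c) (T : List ℕ) (A : Finset ℕ) :
    MinI (c :: T) A ↔ MinI T A ∨ ((∃ e, EvI T e ∧ A = e ∆ FF T.length c) ∧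
      ∀ o, MinI T o → ¬ o ⊆ A) := by
  constructor
  · intro h
    rcases (EvI_cons hc T A).1 h.2.1 with h1 | ⟨e, he, rfl⟩
    · left; exact MinI_drop h h1
    · right
      refine ⟨⟨e, he, rfl⟩, fun o ho hs => ?_⟩
      have := h.2.2 o hs ho.1 (EvI_lift c ho.2.1)
      exact top_not_mem ho.2.1 (this ▸ top_mem_new c he)
  · rintro (h | ⟨⟨e, he, rfl⟩, h⟩)
    · exact MinI_lift c h
    · have hev : EvI (c :: T) (e ∆ FF T.length c) := (EvI_cons hc T _).2 (Or.inr ⟨e, he, rfl⟩)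
      refine ⟨⟨_, top_mem_new c he⟩, hev, fun B hB hBne hBe => ?_⟩
      by_contra hne
      by_cases ht : 22 + T.length ∈ B
      · have h1 : EvI (c :: T) ((e ∆ FF T.length c) ∆ B) := EvI_symmDiff hev hBe
        have h2 : EvI T ((e ∆ FF T.length c) ∆ B) := by
          apply EvI_drop h1
          intro h3
          rcases Finset.mem_symmDiff.1 h3 with h4 | h4
          · exact h4.2 ht
          · exact h4.2 (hB ht)
        have h3 : ((e ∆ FF T.length c) ∆ B).Nonempty := by
          rw [Finset.nonempty_iff_ne_empty]
          intro h4
          exact hne (symmDiff_eq_bot.1 h4).symm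
        obtain ⟨o, ho, hm⟩ := exists_min h2 h3
        refine h o hm (ho.trans ?_)
        intro i hi
        rcases Finset.mem_symmDiff.1 hi with h4 | h4
        · exact h4.1
        · exact hB h4.1
      · obtain ⟨o, ho, hm⟩ := exists_min (EvI_drop hBe ht) hBne
        exact h o hm (ho.trans hB)

lemma MinI_nil (A : Finset ℕ) : MinI [] A ↔ A = range 22 := by
  constructor
  · rintro ⟨h1, h2, _⟩
    rcases (EvI_nil A).1 h2 with h | h
    · subst h; simp at h1
    · exact h
  · rintro rfl
    refine ⟨by simp, (EvI_nil _).2 (Or.inr rfl), fun B _ h2 h3 => ?_⟩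
    rcases (EvI_nil B).1 h3 with h | h
    · subst h; simp at h2
    · exact h


noncomputable section
def force {α : Type} (n : Nat) (k : Nat → α) : α := Nat.rec (k 0) (fun m _ => k (Nat.succ m)) n
def fm (n c : Nat) : Nat := 
   Nat.add (Nat.mul 1073741824 (Nat.add (Nat.div (Nat.sub (Nat.pow 32 (Nat.mod c 32)) (Nat.pow 32 (Nat.div c 32))) 31) (Nat.pow 32 (Nat.add 22 n))))
  (Nat.add (Nat.sub (Nat.pow 2 (Nat.mod c 32)) (Nat.pow 2 (Nat.div c 32))) (Nat.pow 2 (Nat.add 22 n)))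
def tst (os : List Nat) (m : Nat) : Bool :=
  List.rec true (fun o _ ih => Bool.rec ih false (Nat.beq (Nat.land o m) o)) os
def lenPow (m : Nat) : Nat := Nat.pow 4 (Nat.mod (Nat.div m 1073741824) 31)
def okc (cy : List Nat) (f : Nat) (bad : Bool) (good : Nat → Bool) (es : List Nat) : Nat → Bool :=
  List.rec good (fun e _ ih N => force (Nat.xor e f) fun m => 
    Bool.rec (ih N) ( 
      Bool.rec (force (Nat.add N (lenPow m)) ih) bad (Nat.ble 2 (Nat.mod (Nat.div N (lenPow m)) 4))) 
    (tst cy m)) es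
def revk (k : List Nat → Bool) (acc : List Nat) : List Nat → Bool :=
  List.rec k (fun e _ ih out => ih (e::out)) acc
def ext (cy : List Nat) (f : Nat) (k : List Nat → List Nat → Nat → Bool) (es : List Nat) : List Nat → List Nat → Nat → Bool :=
  List.rec (fun ev cy' N => revk (fun ev => k ev cy' N) ev []) (fun e _ ih ev cy' N => force (Nat.xor e f) fun m =>
    Bool.rec (ih (m::ev) cy' N)  
      (force (Nat.add N (lenPow m)) fun N' => ih (m::ev) (m::cy') N') (tst cy m)) es
def final (sols : List (List Nat)) (T : List Nat) (N : Nat) : Bool :=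
  Bool.rec true (sols.contains T) (Nat.beq N 37529996894720)
def filt (sols : List (List Nat)) (T : List Nat) (n : Nat) (ev : List Nat) (cy : List Nat) (N : Nat) (k : List Nat → Bool) (L : List Nat) : List Nat → Bool :=
  List.rec (fun acc => revk k acc []) (fun c _ ih acc => force (fm n c) fun f => okc cy f (ih acc) (fun N' => Bool.rec false (ih (c::acc)) (final sols (c::T) N')) ev N) L
def search (sols : List (List Nat)) (fuel : Nat) : Nat → List Nat → List Nat → List Nat → Nat → List Nat → Bool :=
  Nat.rec (fun _ _ _ _ _ _ => true) (fun _ ih n T ev cy N L => 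
      filt sols T n ev cy N (fun L =>
    (List.rec true (fun c r ihr => Bool.rec false ihr 
       (List.rec true (fun _ _ _ =>
        (force (fm n c) fun f => revk (fun rev => ext cy f (fun ev' cy' N' => ih (Nat.succ n) (c::T) ev' cy' N' r) ev rev cy N) ev []))
         r)) L)) L []) fuel
def HC : Nat := 2^30*((32^22-1)/31) + (2^22-1)
def runD (sols : List (List Nat)) (d : Nat) (L : List Nat) : Bool :=
  force (fm 0 d) fun f => force HC fun HC => ext [HC] f (fun ev cy N => search sols 5 1 [d] ev cy N L) [0,HC] [HC,0] [HC] (4^22)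
def c3 : List Nat := [3, 36, 69, 102, 135, 168, 201, 234, 267, 300, 333, 366, 399, 432, 465, 498, 531, 564, 597, 19, 52, 85]
def c5 : List Nat := [5, 38, 71, 104, 137, 170, 203, 236, 269, 302, 335, 368, 401, 434, 467, 500, 533, 17, 50, 83, 116, 149]
def c7 : List Nat := [7, 40, 73, 106, 139, 172, 205, 238, 271, 304, 337, 370, 403, 436, 469, 15, 48, 81, 114, 147, 180, 213]
def c9 : List Nat := [9, 42, 75, 108, 141, 174, 207, 240, 273, 306, 339, 372, 405, 13, 46, 79, 112, 145, 178, 211, 244, 277]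
def c11 : List Nat := [11, 44, 77, 110, 143, 176, 209, 242, 275, 308, 341]
end

open scoped symmDiff

/-- numeric encoding of index sets: a compact mask and a mask spread in base 32 -/
def enc (A : Finset ℕ) : ℕ := 2 ^ 30 * (∑ i ∈ A, 32 ^ i) + ∑ i ∈ A, 2 ^ i

lemma testBit_sum (S : Finset ℕ) (j : ℕ) : (∑ i ∈ S, 2 ^ i).testBit j = decide (j ∈ S) := by
  rw [Bool.eq_iff_iff, ← Nat.mem_bitIndices, ← List.mem_toFinset,
    Finset.toFinset_bitIndices_sum_two_pow, decide_eq_true_iff]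

lemma sum_32 (A : Finset ℕ) : ∑ i ∈ A, 32 ^ i = ∑ j ∈ A.image (fun i => 5 * i), 2 ^ j := by
  rw [Finset.sum_image (by intro a _ b _ h; simpa using h)]
  apply Finset.sum_congr rfl
  intro i _
  rw [pow_mul]; norm_num

lemma sum_two_lt {A : Finset ℕ} (hA : A ⊆ range 30) : ∑ i ∈ A, 2 ^ i < 2 ^ 30 :=
  Nat.geomSum_lt le_rfl fun k hk => by simpa using hA hk

lemma testBit_enc {A : Finset ℕ} (hA : A ⊆ range 30) (j : ℕ) :
    (enc A).testBit j = if j < 30 then decide (j ∈ A) else decide (j - 30 ∈ A.image (fun i => 5 * i)) := by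
  rw [enc, Nat.testBit_two_pow_mul_add _ (sum_two_lt hA), testBit_sum, sum_32, testBit_sum]

lemma mem_image5 (A B : Finset ℕ) (j : ℕ) :
    j ∈ (A ∆ B).image (fun i => 5 * i) ↔
      ¬ (j ∈ A.image (fun i => 5 * i) ↔ j ∈ B.image (fun i => 5 * i)) := by
  simp only [mem_image]
  by_cases h : ∃ i, 5 * i = j
  · obtain ⟨i, rfl⟩ := h
    have : ∀ C : Finset ℕ, (∃ a ∈ C, 5 * a = 5 * i) ↔ i ∈ C := by
      intro C
      constructor
      · rintro ⟨a, ha, h⟩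
        have : a = i := by omega
        exact this ▸ ha
      · intro h; exact ⟨i, h, rfl⟩
    rw [this, this, this, Finset.mem_symmDiff]
    tauto
  · have : ∀ C : Finset ℕ, ¬ (∃ a ∈ C, 5 * a = j) := by
      rintro C ⟨a, _, h'⟩; exact h ⟨a, h'⟩
    simp only [this]; simp

lemma enc_symmDiff {A B : Finset ℕ} (hA : A ⊆ range 30) (hB : B ⊆ range 30) :
    enc (A ∆ B) = Nat.xor (enc A) (enc B) := by
  have hAB : A ∆ B ⊆ range 30 := by
    intro i hi
    rcases Finset.mem_symmDiff.1 hi with h | h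
    · exact hA h.1
    · exact hB h.1
  apply Nat.eq_of_testBit_eq
  intro j
  show _ = (enc A ^^^ enc B).testBit j
  rw [Nat.testBit_xor, testBit_enc hA, testBit_enc hB, testBit_enc hAB]
  split_ifs with h
  · rw [Bool.eq_iff_iff]
    simp only [decide_eq_true_eq, Finset.mem_symmDiff]
    by_cases a : j ∈ A <;> by_cases b : j ∈ B <;> simp [a, b]
  · rw [Bool.eq_iff_iff, decide_eq_true_eq, mem_image5]
    by_cases a : j - 30 ∈ A.image (fun i => 5 * i) <;>
      by_cases b : j - 30 ∈ B.image (fun i => 5 * i) <;> simp only [a, b] <;> simp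

lemma enc_subset {A B : Finset ℕ} (hA : A ⊆ range 30) (hB : B ⊆ range 30) :
    Nat.beq (Nat.land (enc A) (enc B)) (enc A) = decide (A ⊆ B) := by
  rw [Bool.eq_iff_iff, Nat.beq_eq, decide_eq_true_eq]
  show enc A &&& enc B = enc A ↔ _
  constructor
  · intro h i hi
    have h1 := congrArg (fun x => Nat.testBit x i) h
    have hi30 : i < 30 := by simpa using hA hi
    simp only [Nat.testBit_and, testBit_enc hA, testBit_enc hB, if_pos hi30, hi] at h1
    simpa using h1
  · intro h
    apply Nat.eq_of_testBit_eq
    intro j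
    rw [Nat.testBit_and, testBit_enc hA, testBit_enc hB]
    split_ifs
    · by_cases a : j ∈ A
      · simp [a, h a]
      · simp [a]
    · by_cases a : j - 30 ∈ A.image (fun i => 5 * i)
      · have b : j - 30 ∈ B.image (fun i => 5 * i) := Finset.image_subset_image h a
        rw [decide_eq_true a, decide_eq_true b]; rfl
      · rw [decide_eq_false a]; rfl

lemma lenPow_enc {A : Finset ℕ} (hA : A ⊆ range 30) : lenPow (enc A) = 4 ^ #A := by
  have hc : #A ≤ 30 := by simpa using Finset.card_le_card hA
  have h1 : enc A / 1073741824 = ∑ i ∈ A, 32 ^ i := by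
    have := sum_two_lt hA
    rw [enc, show (1073741824 : ℕ) = 2 ^ 30 by norm_num]
    omega
  have h2 : (∑ i ∈ A, 32 ^ i) % 31 = #A % 31 := by
    rw [Finset.sum_nat_mod]
    have : ∀ i ∈ A, 32 ^ i % 31 = 1 := fun i _ => by rw [Nat.pow_mod]; simp
    rw [Finset.sum_congr rfl this]; simp
  show 4 ^ ((enc A / 1073741824) % 31) = _
  rw [h1, h2, Nat.mod_eq_of_lt (by omega)]

lemma geo2 (m a b : ℕ) (hm : 2 ≤ m) (h : a ≤ b) :
    ∑ i ∈ Ico a b, m ^ i = (m ^ b - m ^ a) / (m - 1) := by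
  have h0 : (m - 1) * ∑ i ∈ Ico a b, m ^ i + m ^ a = m ^ b := by
    obtain ⟨m, rfl⟩ : ∃ k, m = k + 1 := ⟨m - 1, by omega⟩
    induction b, h using Nat.le_induction with
    | base => simp
    | succ b hb ih =>
      rw [Finset.sum_Ico_succ_top hb, pow_succ, ← ih]
      simp only [Nat.add_sub_cancel] at ih ⊢
      ring
  rw [← h0, Nat.add_sub_cancel, Nat.mul_div_cancel_left _ (by omega)]

lemma fm_eq {c : ℕ} (hc : VC c) (n : ℕ) : fm n c = enc (FF n c) := by
  unfold VC at hc
  have hn : 22 + n ∉ Ico (c / 32) (c % 32) := by rw [mem_Ico]; omega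
  rw [enc, FF, Finset.sum_insert hn, Finset.sum_insert hn, geo2 32 _ _ (by norm_num) (by omega),
    geo2 2 _ _ (by norm_num) (by omega)]
  show 1073741824 * ((32 ^ (c % 32) - 32 ^ (c / 32)) / 31 + 32 ^ (22 + n)) +
    ((2 ^ (c % 32) - 2 ^ (c / 32)) + 2 ^ (22 + n)) = _
  norm_num
  ring_nf

lemma enc_empty : enc ∅ = 0 := by simp [enc]

lemma enc_HC : enc (range 22) = HC := by
  unfold enc HC
  rw [Nat.geomSum_eq (by norm_num), Nat.geomSum_eq (by norm_num)]
  norm_num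

/-! Counter. -/

def pk (C : List (Finset ℕ)) : ℕ := (C.map (fun A => 4 ^ #A)).sum

def cnt (C : List (Finset ℕ)) (L : ℕ) : ℕ := C.countP (fun A => #A == L)

lemma pk_eq (C : List (Finset ℕ)) (B : ℕ) (h : ∀ A ∈ C, #A < B) :
    pk C = ∑ l ∈ range B, cnt C l * 4 ^ l := by
  induction C with
  | nil => simp [pk, cnt]
  | cons A C ih =>
    have h1 : pk (A :: C) = 4 ^ #A + pk C := by simp [pk]
    have h2 : ∀ l, cnt (A :: C) l = cnt C l + if #A = l then 1 else 0 := by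
      intro l; simp [cnt, List.countP_cons]
    rw [h1, ih fun A hA => h A (by simp [hA])]
    simp only [h2, add_mul, Finset.sum_add_distrib, ite_mul, one_mul, zero_mul]
    rw [Finset.sum_ite_eq, if_pos (by simpa using h A (by simp))]
    omega

lemma digit (c : ℕ → ℕ) (hc : ∀ l, c l ≤ 3) (B L : ℕ) (hL : L < B) :
    (∑ l ∈ range B, c l * 4 ^ l) / 4 ^ L % 4 = c L := by
  induction L generalizing c B with
  | zero =>
    obtain ⟨B, rfl⟩ : ∃ k, B = k + 1 := ⟨B - 1, by omega⟩
    rw [Finset.sum_range_succ']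
    have : ∑ k ∈ range B, c (k+1) * 4 ^ (k+1) = 4 * ∑ k ∈ range B, c (k+1) * 4 ^ k := by
      rw [Finset.mul_sum]; apply Finset.sum_congr rfl; intros; ring
    rw [this]
    have := hc 0
    simp only [pow_zero, Nat.div_one, mul_one]
    omega
  | succ L ih =>
    obtain ⟨B, rfl⟩ : ∃ k, B = k + 1 := ⟨B - 1, by omega⟩
    rw [Finset.sum_range_succ']
    have : ∑ k ∈ range B, c (k+1) * 4 ^ (k+1) = 4 * ∑ k ∈ range B, c (k+1) * 4 ^ k := by
      rw [Finset.mul_sum]; apply Finset.sum_congr rfl; intros; ring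
    rw [this, pow_succ', ← Nat.div_div_eq_div_mul]
    have h0 := hc 0
    have : (4 * ∑ k ∈ range B, c (k+1) * 4 ^ k + c 0 * 4 ^ 0) / 4 = ∑ k ∈ range B, c (k+1) * 4 ^ k := by
      simp only [pow_zero, mul_one]; omega
    rw [this, ih (fun l => c (l+1)) (fun l => hc _) B (by omega)]

lemma pk_digit (C : List (Finset ℕ)) (hc : ∀ l, cnt C l ≤ 3) (L : ℕ) :
    pk C / 4 ^ L % 4 = cnt C L := by
  obtain ⟨B, hB⟩ : ∃ B, ∀ A ∈ C, #A < B := by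
    refine ⟨(C.map Finset.card).sum + 1, fun A hA => ?_⟩
    have := List.single_le_sum (l := C.map Finset.card) (by simp) (#A) (List.mem_map_of_mem hA)
    omega
  rw [pk_eq C (max B (L+1)) (fun A hA => lt_of_lt_of_le (hB A hA) (le_max_left _ _))]
  exact digit _ hc _ _ (by omega)

lemma pk_append (C D : List (Finset ℕ)) : pk (C ++ D) = pk C + pk D := by simp [pk]

lemma cnt_append (C D : List (Finset ℕ)) (L : ℕ) : cnt (C ++ D) L = cnt C L + cnt D L := by
  simp [cnt]

lemma cnt_perm {C D : List (Finset ℕ)} (h : C.Perm D) (L : ℕ) : cnt C L = cnt D L :=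
  h.countP_eq _

lemma pk_perm {C D : List (Finset ℕ)} (h : C.Perm D) : pk C = pk D :=
  (h.map _).sum_eq

open scoped symmDiff

lemma force_eq {α : Type} (n : ℕ) (k : ℕ → α) : force n k = k n := by
  cases n <;> rfl

lemma revk_eq (k : List ℕ → Bool) (acc out : List ℕ) : revk k acc out = k (acc.reverse ++ out) := by
  induction acc generalizing out with
  | nil => rfl
  | cons e acc ih =>
    have : revk k (e :: acc) out = revk k acc (e :: out) := rfl
    rw [this, ih]; simp

lemma tst_eq {C : List (Finset ℕ)} {A : Finset ℕ} (hC : ∀ o ∈ C, o ⊆ range 30) (hA : A ⊆ range 30) :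
    tst (C.map enc) (enc A) = decide (∀ o ∈ C, ¬ o ⊆ A) := by
  induction C with
  | nil => simp [tst]
  | cons o C ih =>
    have h1 : tst ((o :: C).map enc) (enc A) =
      Bool.rec (motive := fun _ => Bool) (tst (C.map enc) (enc A)) false
        (Nat.beq (Nat.land (enc o) (enc A)) (enc o)) := rfl
    rw [h1, ih (fun o ho => hC o (by simp [ho])), enc_subset (hC o (by simp)) hA]
    by_cases h : o ⊆ A
    · rw [decide_eq_true h]
      symm
      simp [h]
    · rw [decide_eq_false h]
      simp [h]

/-- new cycles -/
def newF (C : List (Finset ℕ)) (F : Finset ℕ) (E : List (Finset ℕ)) : List (Finset ℕ) :=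
  (E.map (fun e => e ∆ F)).filter (fun A => decide (∀ o ∈ C, ¬ o ⊆ A))

lemma symm_sub {A B : Finset ℕ} {n : ℕ} (hA : A ⊆ range n) (hB : B ⊆ range n) : A ∆ B ⊆ range n := by
  intro i hi
  rcases Finset.mem_symmDiff.1 hi with h | h
  · exact hA h.1
  · exact hB h.1

lemma okc_cons (cy : List ℕ) (f : ℕ) (bad : Bool) (good : ℕ → Bool) (e : ℕ) (es : List ℕ) (N : ℕ) :
    okc cy f bad good (e :: es) N =
      if tst cy (Nat.xor e f) then
        (if 2 ≤ N / lenPow (Nat.xor e f) % 4 then bad else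
          okc cy f bad good es (N + lenPow (Nat.xor e f)))
      else okc cy f bad good es N := by
  have h1 : okc cy f bad good (e :: es) N = force (Nat.xor e f) fun m =>
    Bool.rec (okc cy f bad good es N) (
      Bool.rec (force (Nat.add N (lenPow m)) (okc cy f bad good es)) bad
        (Nat.ble 2 (Nat.mod (Nat.div N (lenPow m)) 4))) (tst cy m) := rfl
  rw [h1, force_eq]
  cases tst cy (Nat.xor e f)
  · rfl
  · simp only [if_true]
    by_cases h : 2 ≤ N / lenPow (Nat.xor e f) % 4
    · have h2 : Nat.ble 2 (Nat.mod (Nat.div N (lenPow (Nat.xor e f))) 4) = true := by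
        rw [Nat.ble_eq]; exact h
      rw [h2, if_pos h]
    · have h2 : Nat.ble 2 (Nat.mod (Nat.div N (lenPow (Nat.xor e f))) 4) = false := by
        rw [← Bool.not_eq_true, Nat.ble_eq]; exact h
      rw [h2, if_neg h, force_eq]; rfl

lemma okc_or (cy : List ℕ) (f : ℕ) (bad : Bool) (good : ℕ → Bool) (es : List ℕ) (N : ℕ)
    (h : okc cy f bad good es N = true) : bad = true ∨ ∃ N', good N' = true := by
  induction es generalizing N with
  | nil => exact Or.inr ⟨N, h⟩
  | cons e es ih =>
    rw [okc_cons] at h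
    split_ifs at h
    · exact Or.inl h
    · exact ih _ h
    · exact ih _ h

lemma okc_spec (C : List (Finset ℕ)) (F : Finset ℕ) (bad : Bool) (good : ℕ → Bool)
    (hC : ∀ o ∈ C, o ⊆ range 30) (hF : F ⊆ range 30) (E : List (Finset ℕ)) (hE : ∀ e ∈ E, e ⊆ range 30)
    (P : List (Finset ℕ)) (hcnt : ∀ l, cnt (P ++ newF C F E) l ≤ 2) :
    okc (C.map enc) (enc F) bad good (E.map enc) (pk P) = good (pk (P ++ newF C F E)) := by
  induction E generalizing P with
  | nil => simp [newF]; rfl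
  | cons e E ih =>
    have he := hE e (by simp)
    have hE' : ∀ e ∈ E, e ⊆ range 30 := fun e h => hE e (by simp [h])
    rw [List.map_cons, okc_cons, ← enc_symmDiff he hF, tst_eq hC (symm_sub he hF),
      lenPow_enc (symm_sub he hF)]
    by_cases hnew : ∀ o ∈ C, ¬ o ⊆ e ∆ F
    · have hl : newF C F (e :: E) = (e ∆ F) :: newF C F E := by
        unfold newF
        rw [List.map_cons, List.filter_cons_of_pos (by simpa using hnew)]
      rw [hl] at hcnt ⊢
      have hcnt' : ∀ l, cnt ((P ++ [e ∆ F]) ++ newF C F E) l ≤ 2 := by simpa using hcnt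
      have hp : ∀ l, cnt P l + cnt [e ∆ F] l ≤ 2 := by
        intro l
        have := hcnt' l
        rw [cnt_append, cnt_append] at this
        omega
      have h1 : cnt [e ∆ F] #(e ∆ F) = 1 := by simp [cnt]
      have h2 := hp #(e ∆ F)
      rw [if_pos (by simpa using hnew), pk_digit P (fun l => by have := hp l; omega), if_neg (by omega)]
      have h3 : pk P + 4 ^ #(e ∆ F) = pk (P ++ [e ∆ F]) := by simp [pk]
      rw [h3, ih hE' _ hcnt']
      simp
    · have hl : newF C F (e :: E) = newF C F E := by
        unfold newF
        rw [List.map_cons, List.filter_cons_of_neg (by simpa using hnew)]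
      rw [hl] at hcnt ⊢
      rw [if_neg (by simpa using hnew)]
      exact ih hE' P hcnt

lemma ext_cons (cy : List ℕ) (f : ℕ) (k : List ℕ → List ℕ → ℕ → Bool) (e : ℕ) (es ev cy' : List ℕ) (N : ℕ) :
    ext cy f k (e :: es) ev cy' N =
      if tst cy (Nat.xor e f) then
        ext cy f k es (Nat.xor e f :: ev) (Nat.xor e f :: cy') (N + lenPow (Nat.xor e f))
      else ext cy f k es (Nat.xor e f :: ev) cy' N := by
  have h1 : ext cy f k (e :: es) ev cy' N = force (Nat.xor e f) fun m =>
    Bool.rec (ext cy f k es (m :: ev) cy' N)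
      (force (Nat.add N (lenPow m)) fun N' => ext cy f k es (m :: ev) (m :: cy') N') (tst cy m) := rfl
  rw [h1, force_eq]
  cases tst cy (Nat.xor e f)
  · rfl
  · simp only [if_true, force_eq]; rfl

lemma ext_spec (C : List (Finset ℕ)) (F : Finset ℕ) (k : List ℕ → List ℕ → ℕ → Bool)
    (hC : ∀ o ∈ C, o ⊆ range 30) (hF : F ⊆ range 30) (E : List (Finset ℕ)) (hE : ∀ e ∈ E, e ⊆ range 30)
    (X P : List (Finset ℕ)) :
    ext (C.map enc) (enc F) k (E.map enc) (X.map enc) (P.map enc) (pk P) =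
      k ((X.reverse ++ E.map (fun e => e ∆ F)).map enc) (((newF C F E).reverse ++ P).map enc)
        (pk ((newF C F E).reverse ++ P)) := by
  induction E generalizing P X with
  | nil =>
    have : ext (C.map enc) (enc F) k ([].map enc) (X.map enc) (P.map enc) (pk P) =
      revk (fun ev => k ev (P.map enc) (pk P)) (X.map enc) [] := rfl
    rw [this, revk_eq]
    simp [newF]
  | cons e E ih =>
    have he := hE e (by simp)
    have hE' : ∀ e ∈ E, e ⊆ range 30 := fun e h => hE e (by simp [h])
    rw [List.map_cons, ext_cons, ← enc_symmDiff he hF, tst_eq hC (symm_sub he hF),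
      lenPow_enc (symm_sub he hF), ← List.map_cons]
    by_cases hnew : ∀ o ∈ C, ¬ o ⊆ e ∆ F
    · have hl : newF C F (e :: E) = (e ∆ F) :: newF C F E := by
        unfold newF
        rw [List.map_cons, List.filter_cons_of_pos (by simpa using hnew)]
      rw [hl, if_pos (by simpa using hnew)]
      have h3 : pk P + 4 ^ #(e ∆ F) = pk ((e ∆ F) :: P) := by simp [pk, add_comm]
      rw [h3, ← List.map_cons, ih hE']
      simp
    · have hl : newF C F (e :: E) = newF C F E := by
        unfold newF
        rw [List.map_cons, List.filter_cons_of_neg (by simpa using hnew)]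
      rw [hl, if_neg (by simpa using hnew), ih hE']
      simp

/-- Invariant of the search. -/
def Inv (T : List ℕ) (E C : List (Finset ℕ)) : Prop :=
  E.Nodup ∧ C.Nodup ∧ (∀ A, A ∈ E ↔ EvI T A) ∧ (∀ A, A ∈ C ↔ MinI T A)

lemma Inv_nil : Inv [] [∅, range 22] [range 22] := by
  refine ⟨?_, by simp, fun A => ?_, fun A => ?_⟩
  · have : (∅ : Finset ℕ) ≠ range 22 := by decide
    simp [this]
  · rw [EvI_nil]; simp
  · rw [MinI_nil]; simp

lemma Inv_cons {T : List ℕ} {E C : List (Finset ℕ)} (h : Inv T E C) {c : ℕ} (hc : VC c) :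
    Inv (c :: T) (E ++ E.map (fun e => e ∆ FF T.length c))
      ((newF C (FF T.length c) E).reverse ++ C) := by
  obtain ⟨hE, hC, mE, mC⟩ := h
  have hmap : (E.map (fun e => e ∆ FF T.length c)).Nodup :=
    hE.map (symmDiff_left_injective _)
  have hnew : ∀ A, A ∈ newF C (FF T.length c) E ↔
      ((∃ e, EvI T e ∧ A = e ∆ FF T.length c) ∧ ∀ o, MinI T o → ¬ o ⊆ A) := by
    intro A
    unfold newF
    rw [List.mem_filter, List.mem_map, decide_eq_true_eq]
    apply and_congr
    · constructor
      · rintro ⟨e, he, rfl⟩; exact ⟨e, (mE e).1 he, rfl⟩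
      · rintro ⟨e, he, rfl⟩; exact ⟨e, (mE e).2 he, rfl⟩
    · constructor
      · intro h o ho; exact h o ((mC o).2 ho)
      · intro h o ho; exact h o ((mC o).1 ho)
  refine ⟨?_, ?_, fun A => ?_, fun A => ?_⟩
  · rw [List.nodup_append']
    refine ⟨hE, hmap, ?_⟩
    intro A h1 h2
    obtain ⟨e, he, rfl⟩ := List.mem_map.1 h2
    exact top_not_mem ((mE _).1 h1) (top_mem_new c ((mE _).1 he))
  · rw [List.nodup_append']
    refine ⟨List.nodup_reverse.2 (hmap.filter _), hC, ?_⟩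
    intro A h1 h2
    obtain ⟨⟨e, he, rfl⟩, _⟩ := (hnew A).1 (List.mem_reverse.1 h1)
    exact top_not_mem ((mC _).1 h2).2.1 (top_mem_new c he)
  · rw [EvI_cons hc, List.mem_append, mE, List.mem_map]
    apply or_congr Iff.rfl
    constructor
    · rintro ⟨e, he, rfl⟩; exact ⟨e, (mE e).1 he, rfl⟩
    · rintro ⟨e, he, rfl⟩; exact ⟨e, (mE e).2 he, rfl⟩
  · rw [MinI_cons hc, List.mem_append, mC, List.mem_reverse, hnew, or_comm]

open scoped symmDiff

/-- `S` codes a graph with the required cycle counts. -/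
def Good (S : Finset ℕ) : Prop :=
  (∀ c ∈ S, VC c) ∧ #S ≤ 5 ∧
    ∀ n, cycleCount (GS S) (n+3) = if n + 3 ≤ 22 ∧ Even (n+3) then 2 else 0

lemma MinI_card {T : List ℕ} (hT : T.Nodup) (hv : ∀ c ∈ T, VC c) {A : Finset ℕ} (h : MinI T A) :
    3 ≤ #A := by
  have hA := h.2.1.1
  have h1 := (minD_iff T hT hv A hA).2 h
  have hc : #(A.image (ed T)) = #A :=
    Finset.card_image_of_injOn ((ed_injOn_set T hT hv).mono (by exact_mod_cast hA))
  obtain ⟨n, f, hf, hs⟩ := exists_cyc (A.image (ed T)) (by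
    intro e he
    obtain ⟨i, hi, rfl⟩ := mem_image.1 he
    exact ed_not_diag T hv i (by simpa using hA hi)) h1.1 h1.2.1
  have h2 := Set.ncard_le_ncard hs (Set.toFinite _)
  rw [cyc_ncard hf, Set.ncard_coe_finset, hc] at h2
  omega

lemma cnt_eq {T : List ℕ} (hT : T.Nodup) (hv : ∀ c ∈ T, VC c) {E C : List (Finset ℕ)}
    (hI : Inv T E C) (n : ℕ) : cnt C (n+3) = cycleCount (GS T.toFinset) (n+3) :=
  (cycleCount_GS T hT hv C hI.2.1 hI.2.2.2 n).symm

lemma cnt_small {T : List ℕ} (hT : T.Nodup) (hv : ∀ c ∈ T, VC c) {E C : List (Finset ℕ)}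
    (hI : Inv T E C) (l : ℕ) (hl : l < 3) : cnt C l = 0 := by
  unfold cnt
  rw [List.countP_eq_zero]
  intro A hA h
  have := MinI_card hT hv ((hI.2.2.2 A).1 hA)
  have h2 : #A = l := by simpa using h
  omega

lemma good_cnt {S : Finset ℕ} (hS : Good S) {T : List ℕ} (hT : T.Nodup) (hTS : T.toFinset ⊆ S)
    {E C : List (Finset ℕ)} (hI : Inv T E C) (l : ℕ) : cnt C l ≤ 2 := by
  have hv : ∀ c ∈ T, VC c := fun c hc => hS.1 c (hTS (by simpa using hc))
  by_cases hl : l < 3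
  · rw [cnt_small hT hv hI l hl]; omega
  · obtain ⟨n, rfl⟩ : ∃ n, l = n + 3 := ⟨l - 3, by omega⟩
    rw [cnt_eq hT hv hI]
    refine (cycleCount_mono (GS_mono hTS) n).trans ?_
    rw [hS.2.2]
    split_ifs <;> omega

lemma good_pk {S : Finset ℕ} (hS : Good S) {T : List ℕ} (hT : T.Nodup) (hTS : T.toFinset = S)
    {E C : List (Finset ℕ)} (hI : Inv T E C) : pk C = 37529996894720 := by
  have hv : ∀ c ∈ T, VC c := fun c hc => hS.1 c (by rw [← hTS]; simpa using hc)
  have h1 : ∀ l, cnt C l = if 3 ≤ l ∧ l ≤ 22 ∧ Even l then 2 else 0 := by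
    intro l
    by_cases hl : l < 3
    · rw [cnt_small hT hv hI l hl, if_neg (by omega)]
    · obtain ⟨n, rfl⟩ : ∃ n, l = n + 3 := ⟨l - 3, by omega⟩
      rw [cnt_eq hT hv hI, hTS, hS.2.2]
      have : 3 ≤ n + 3 := by omega
      simp only [this, true_and]
  have h2 : ∀ A ∈ C, #A < 23 := by
    intro A hA
    by_contra h
    have h3 := h1 #A
    rw [if_neg (by omega)] at h3
    unfold cnt at h3
    rw [List.countP_eq_zero] at h3
    exact h3 A hA (by simp)
  rw [pk_eq C 23 h2]
  simp only [h1]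
  decide

lemma final_spec {sols : List (List ℕ)} {T : List ℕ} {N : ℕ} (h : final sols T N = true)
    (hN : N = 37529996894720) : T ∈ sols := by
  subst hN
  have h1 : final sols T 37529996894720 = sols.contains T := rfl
  rw [h1] at h
  simpa using h

lemma Inv_sub {T : List ℕ} {E C : List (Finset ℕ)} (hI : Inv T E C) (hT : T.length ≤ 7) :
    (∀ e ∈ E, e ⊆ range 30) ∧ (∀ o ∈ C, o ⊆ range 30) := by
  have : range (22 + T.length) ⊆ range 30 := Finset.range_subset_range.2 (by omega)
  exact ⟨fun e he => (((hI.2.2.1 e).1 he).1).trans this,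
    fun o ho => (((hI.2.2.2 o).1 ho).2.1.1).trans this⟩

lemma FF_sub {c : ℕ} (hc : VC c) {n : ℕ} (hn : n ≤ 7) : FF n c ⊆ range 30 := by
  unfold VC at hc
  intro i hi
  rw [FF, mem_insert, mem_Ico] at hi
  rw [mem_range]
  omega

lemma len_le {S : Finset ℕ} {T : List ℕ} (hT : T.Nodup) (hTS : T.toFinset ⊆ S) : T.length ≤ #S := by
  rw [← List.toFinset_card_of_nodup hT]
  exact Finset.card_le_card hTS

lemma filt_spec {S : Finset ℕ} (hS : Good S) (sols : List (List ℕ)) {T : List ℕ} (hT : T.Nodup)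
    (hTS : T.toFinset ⊆ S) {E C : List (Finset ℕ)} (hI : Inv T E C) (k : List ℕ → Bool)
    (L acc : List ℕ) (hL : ∀ c ∈ L, c ∉ T)
    (h : filt sols T T.length (E.map enc) (C.map enc) (pk C) k L acc = true) :
    ∃ L', k L' = true ∧ L'.Sublist (acc.reverse ++ L) ∧ (∀ c ∈ S, c ∈ acc ∨ c ∈ L → c ∈ L') ∧
      ∀ c ∈ S, c ∈ L → (c :: T).toFinset = S → (c :: T) ∈ sols := by
  induction L generalizing acc with
  | nil =>
    have h1 : filt sols T T.length (E.map enc) (C.map enc) (pk C) k [] acc = revk k acc [] := rfl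
    rw [h1, revk_eq] at h
    refine ⟨_, h, List.Sublist.refl _, ?_, by simp⟩
    intro c _ hc
    simpa using hc
  | cons c L ih =>
    have h1 : filt sols T T.length (E.map enc) (C.map enc) (pk C) k (c :: L) acc =
      force (fm T.length c) fun f => okc (C.map enc) f
        (filt sols T T.length (E.map enc) (C.map enc) (pk C) k L acc)
        (fun N' => Bool.rec false (filt sols T T.length (E.map enc) (C.map enc) (pk C) k L (c :: acc))
          (final sols (c :: T) N')) (E.map enc) (pk C) := rfl
    rw [h1, force_eq] at h
    have hL' : ∀ c ∈ L, c ∉ T := fun c hc => hL c (by simp [hc])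
    have keep : ∀ N', (Bool.rec false (filt sols T T.length (E.map enc) (C.map enc) (pk C) k L (c :: acc))
          (final sols (c :: T) N') : Bool) = true →
        filt sols T T.length (E.map enc) (C.map enc) (pk C) k L (c :: acc) = true ∧
          final sols (c :: T) N' = true := by
      intro N' hh
      cases hf : final sols (c :: T) N'
      · rw [hf] at hh; exact absurd hh (by simp)
      · rw [hf] at hh; exact ⟨hh, rfl⟩
    have app : acc.reverse ++ c :: L = (c :: acc).reverse ++ L := by simp
    by_cases hcS : c ∈ S
    · have hvc := hS.1 c hcS
      have hTc : (c :: T).Nodup := List.nodup_cons.2 ⟨hL c (by simp), hT⟩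
      have hcTS : (c :: T).toFinset ⊆ S := by
        rw [List.toFinset_cons]; exact Finset.insert_subset hcS hTS
      have hlen : T.length ≤ 7 := by
        have := len_le hT hTS
        have := hS.2.1
        omega
      have hIc := Inv_cons hI hvc
      have hperm : ((newF C (FF T.length c) E).reverse ++ C).Perm (C ++ newF C (FF T.length c) E) :=
        List.perm_append_comm.trans (List.Perm.append_left _ (List.reverse_perm _))
      rw [fm_eq hvc, okc_spec C _ _ _ (Inv_sub hI hlen).2 (FF_sub hvc hlen) E (Inv_sub hI hlen).1 C
        (fun l => by rw [← cnt_perm hperm]; exact good_cnt hS hTc hcTS hIc l)] at h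
      obtain ⟨h2, h3⟩ := keep _ h
      obtain ⟨L', hk, hsub, hmem, hsol⟩ := ih (c :: acc) hL' h2
      refine ⟨L', hk, app ▸ hsub, ?_, ?_⟩
      · intro x hx hx'
        apply hmem x hx
        simp only [List.mem_cons] at hx' ⊢
        tauto
      · intro x hx hx' hxT
        rcases List.mem_cons.1 hx' with rfl | hx'
        · refine final_spec h3 ?_
          rw [← pk_perm hperm]
          exact good_pk hS hTc hxT hIc
        · exact hsol x hx hx' hxT
    · rcases okc_or _ _ _ _ _ _ h with h2 | ⟨N', h2⟩
      · obtain ⟨L', hk, hsub, hmem, hsol⟩ := ih acc hL' h2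
        refine ⟨L', hk, hsub.trans (List.Sublist.append_left (List.sublist_cons_self _ _) _), ?_, ?_⟩
        · intro x hx hx'
          apply hmem x hx
          rcases hx' with hx' | hx'
          · exact Or.inl hx'
          · rcases List.mem_cons.1 hx' with rfl | hx'
            · exact absurd hx hcS
            · exact Or.inr hx'
        · intro x hx hx' hxT
          rcases List.mem_cons.1 hx' with rfl | hx'
          · exact absurd hx hcS
          · exact hsol x hx hx' hxT
      · obtain ⟨h2, -⟩ := keep _ h2
        obtain ⟨L', hk, hsub, hmem, hsol⟩ := ih (c :: acc) hL' h2
        refine ⟨L', hk, app ▸ hsub, ?_, ?_⟩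
        · intro x hx hx'
          apply hmem x hx
          simp only [List.mem_cons] at hx' ⊢
          tauto
        · intro x hx hx' hxT
          rcases List.mem_cons.1 hx' with rfl | hx'
          · exact absurd hx hcS
          · exact hsol x hx hx' hxT

/-- the loop of `search` -/
noncomputable def loop (body : ℕ → List ℕ → Bool) (L : List ℕ) : Bool :=
  List.rec true (fun c r ihr => Bool.rec false ihr (List.rec true (fun _ _ _ => body c r) r)) L

lemma loop_cons {body : ℕ → List ℕ → Bool} {c : ℕ} {r : List ℕ} (h : loop body (c :: r) = true) :
    loop body r = true ∧ (r = [] ∨ body c r = true) := by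
  have h1 : loop body (c :: r) =
    Bool.rec false (loop body r) (List.rec true (fun _ _ _ => body c r) r) := rfl
  rw [h1] at h
  cases r with
  | nil => exact ⟨h, Or.inl rfl⟩
  | cons a r =>
    cases hb : body c (a :: r)
    · have h2 : (Bool.rec false (loop body (a :: r)) (body c (a :: r)) : Bool) = true := h
      rw [hb] at h2
      exact absurd h2 (by simp)
    · have h2 : (Bool.rec false (loop body (a :: r)) (body c (a :: r)) : Bool) = true := h
      rw [hb] at h2
      exact ⟨h2, Or.inr rfl⟩

lemma search_succ (sols : List (List ℕ)) (fuel n : ℕ) (T ev cy : List ℕ) (N : ℕ) (L : List ℕ) :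
    search sols (fuel+1) n T ev cy N L = filt sols T n ev cy N (fun L => loop (fun c r =>
      force (fm n c) fun f => revk (fun rev => ext cy f (fun ev' cy' N' =>
        search sols fuel (Nat.succ n) (c :: T) ev' cy' N' r) ev rev cy N) ev []) L) L [] := rfl

lemma ext_inv {T : List ℕ} {E C : List (Finset ℕ)} (hI : Inv T E C) (hlen : T.length ≤ 7) {c : ℕ}
    (hc : VC c) (k : List ℕ → List ℕ → ℕ → Bool) :
    ∃ E' C', Inv (c :: T) E' C' ∧
      ext (C.map enc) (fm T.length c) k (E.map enc) (E.map enc).reverse (C.map enc) (pk C) =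
        k (E'.map enc) (C'.map enc) (pk C') := by
  refine ⟨_, _, Inv_cons hI hc, ?_⟩
  rw [fm_eq hc, ← List.map_reverse, ext_spec C _ k (Inv_sub hI hlen).2 (FF_sub hc hlen) E
    (Inv_sub hI hlen).1, List.reverse_reverse]

lemma search_spec {S : Finset ℕ} (hS : Good S) (sols : List (List ℕ)) (fuel : ℕ) :
    ∀ (T L : List ℕ) (E C : List (Finset ℕ)), T.Nodup → T.toFinset ⊆ S → Inv T E C →
      L.Nodup → (∀ c ∈ L, c ∉ T) → S ⊆ T.toFinset ∪ L.toFinset → #S ≤ T.length + fuel →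
      search sols fuel T.length T (E.map enc) (C.map enc) (pk C) L = true →
      S = T.toFinset ∨ ∃ T' ∈ sols, T'.toFinset = S := by
  induction fuel with
  | zero =>
    intro T L E C hT hTS _ _ _ _ hf _
    left
    symm
    apply Finset.eq_of_subset_of_card_le hTS
    rw [List.toFinset_card_of_nodup hT]
    exact hf
  | succ fuel ih =>
    intro T L E C hT hTS hI hLn hL hSL hf h
    rw [search_succ] at h
    obtain ⟨L', hk, hsub, hmem, hsol⟩ := filt_spec hS sols hT hTS hI _ L [] hL h
    simp only [List.reverse_nil, List.nil_append] at hsub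
    have hlen : T.length ≤ 7 := by
      have := len_le hT hTS
      have := hS.2.1
      omega
    have hSL' : S ⊆ T.toFinset ∪ L'.toFinset := by
      intro c hc
      rcases mem_union.1 (hSL hc) with h1 | h1
      · exact mem_union_left _ h1
      · apply mem_union_right
        rw [List.mem_toFinset] at h1 ⊢
        exact hmem c hc (Or.inr h1)
    have hLn' : L'.Nodup := hLn.sublist hsub
    have hLL : ∀ c ∈ L', c ∈ L := fun c hc => hsub.subset hc
    clear hmem h hsub
    induction L' with
    | nil =>
      left
      apply Finset.Subset.antisymm _ hTS
      simpa using hSL'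
    | cons c r ihr =>
      obtain ⟨h1, h2⟩ := loop_cons hk
      have hcr : c ∉ r := (List.nodup_cons.1 hLn').1
      by_cases hcS : c ∈ S
      · have hcL : c ∈ L := hLL c (by simp)
        have hTc : (c :: T).Nodup := List.nodup_cons.2 ⟨hL c hcL, hT⟩
        have hcTS : (c :: T).toFinset ⊆ S := by
          rw [List.toFinset_cons]; exact Finset.insert_subset hcS hTS
        have hcov : S ⊆ (c :: T).toFinset ∪ r.toFinset := by
          intro x hx
          have := hSL' hx
          simp only [mem_union, List.mem_toFinset, List.mem_cons] at this ⊢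
          tauto
        rcases h2 with h2 | h2
        · subst h2
          right
          have : (c :: T).toFinset = S := Finset.Subset.antisymm hcTS (by simpa using hcov)
          exact ⟨c :: T, hsol c hcS hcL this, this⟩
        · rw [force_eq, revk_eq, List.append_nil] at h2
          obtain ⟨E', C', hI', hext⟩ := ext_inv hI hlen (hS.1 c hcS) (fun ev' cy' N' =>
            search sols fuel (Nat.succ T.length) (c :: T) ev' cy' N' r)
          rw [hext] at h2
          rcases ih (c :: T) r E' C' hTc hcTS hI' (List.nodup_cons.1 hLn').2 (by
            intro x hx hxT
            rcases List.mem_cons.1 hxT with rfl | hxT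
            · exact hcr hx
            · exact hL x (hLL x (by simp [hx])) hxT) hcov (by simp; omega) h2 with h3 | h3
          · right
            exact ⟨c :: T, hsol c hcS hcL h3.symm, h3.symm⟩
          · exact Or.inr h3
      · apply ihr h1
        · intro x hx
          have := hSL' hx
          simp only [mem_union, List.mem_toFinset, List.mem_cons] at this ⊢
          rcases this with h | rfl | h
          · exact Or.inl h
          · exact absurd hx hcS
          · exact Or.inr h
        · exact (List.nodup_cons.1 hLn').2
        · intro x hx; exact hLL x (by simp [hx])

lemma runD_spec {S : Finset ℕ} (hS : Good S) (sols : List (List ℕ)) (d : ℕ) (L : List ℕ)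
    (hd : d ∈ S) (hLn : (d :: L).Nodup) (hSL : S ⊆ (d :: L).toFinset)
    (h : runD sols d L = true) : S = {d} ∨ ∃ T' ∈ sols, T'.toFinset = S := by
  unfold runD at h
  rw [force_eq, force_eq] at h
  have hn := List.nodup_cons.1 hLn
  obtain ⟨E', C', hI', hext⟩ := ext_inv Inv_nil (by simp) (hS.1 d hd)
    (fun ev cy N => search sols 5 1 [d] ev cy N L)
  have e1 : ([∅, range 22] : List (Finset ℕ)).map enc = [0, HC] := by simp [enc_empty, enc_HC]
  have e2 : ([range 22] : List (Finset ℕ)).map enc = [HC] := by simp [enc_HC]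
  have e3 : pk [range 22] = 4 ^ 22 := by simp [pk]
  rw [e1, e2, e3] at hext
  have hext' : ext [HC] (fm 0 d) (fun ev cy N => search sols 5 1 [d] ev cy N L) [0, HC] [HC, 0] [HC] (4 ^ 22)
    = search sols 5 1 [d] (E'.map enc) (C'.map enc) (pk C') L := hext
  rw [hext'] at h
  have := search_spec hS sols 5 [d] L E' C' (by simp) (by simpa using hd) hI' hn.2
    (by intro c hc hcd
        have : c = d := by simpa using hcd
        exact hn.1 (this ▸ hc))
    (by intro x hx
        have := hSL hx
        simpa [List.mem_cons] using this)
    (by have := hS.2.1; omega) h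
  simpa using this

/-- the chord sets found by the search -/
def sols : List (List ℕ) :=
  [[333, 5, 42, 9], [366, 5, 42, 9], [399, 5, 42, 9], [432, 5, 42, 9], [465, 5, 42, 9],
   [498, 5, 42, 9], [531, 5, 42, 9], [564, 5, 42, 9], [597, 5, 42, 9], [19, 5, 42, 9],
   [333, 170, 42, 9], [366, 170, 42, 9], [399, 170, 42, 9], [432, 170, 42, 9], [465, 170, 42, 9],
   [498, 170, 42, 9], [531, 170, 42, 9], [564, 170, 42, 9], [597, 170, 42, 9], [19, 170, 42, 9],
   [300, 137, 277, 9], [333, 137, 277, 9], [366, 137, 277, 9], [399, 137, 277, 9], [432, 137, 277, 9],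
   [465, 137, 277, 9], [498, 137, 277, 9], [531, 137, 277, 9], [564, 137, 277, 9], [597, 137, 277, 9],
   [300, 149, 277, 9], [333, 149, 277, 9], [366, 149, 277, 9], [399, 149, 277, 9], [432, 149, 277, 9],
   [465, 149, 277, 9], [498, 149, 277, 9], [531, 149, 277, 9], [564, 149, 277, 9], [597, 149, 277, 9]]

lemma single_spec {d : ℕ} (hS : Good {d})
    (h : ext [HC] (fm 0 d) (fun _ _ N => Nat.beq N 37529996894720) [0, HC] [HC, 0] [HC] (4 ^ 22) =
      false) : False := by
  obtain ⟨E', C', hI', hext⟩ := ext_inv Inv_nil (by simp) (hS.1 d (by simp))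
    (fun _ _ N => Nat.beq N 37529996894720)
  have e1 : ([∅, range 22] : List (Finset ℕ)).map enc = [0, HC] := by simp [enc_empty, enc_HC]
  have e2 : ([range 22] : List (Finset ℕ)).map enc = [HC] := by simp [enc_HC]
  have e3 : pk [range 22] = 4 ^ 22 := by simp [pk]
  rw [e1, e2, e3] at hext
  have hext' : ext [HC] (fm 0 d) (fun _ _ N => Nat.beq N 37529996894720) [0, HC] [HC, 0] [HC]
    (4 ^ 22) = Nat.beq (pk C') 37529996894720 := hext
  rw [h, good_pk hS (T := [d]) (by simp) (by simp) hI'] at hext'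
  exact absurd hext' (by decide)

lemma empty_spec (hS : Good ∅) : False := by
  have h := good_pk hS (T := []) (by simp) (by simp) Inv_nil
  have e3 : pk [range 22] = 4 ^ 22 := by simp [pk]
  rw [e3] at h
  norm_num at h

lemma run9 : runD sols 9 (c9.tail ++ c7 ++ c5 ++ c3 ++ c11) = true := by decide +kernel
lemma run7 : runD sols 7 (c7.tail ++ c5 ++ c3 ++ c11) = true := by decide +kernel
lemma run5 : runD sols 5 (c5.tail ++ c3 ++ c11) = true := by decide +kernel
lemma run3 : runD sols 3 (c3.tail ++ c11) = true := by decide +kernel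
lemma run11 : runD sols 11 c11.tail = true := by decide +kernel

lemma good_sols {S : Finset ℕ} (hS : Good S) (hm : ∀ c ∈ S, c ∈ c9 ++ c7 ++ c5 ++ c3 ++ c11)
    (h : 9 ∈ S ∨ (7 ∈ S ∧ ∀ c ∈ S, c ∉ c9) ∨ (5 ∈ S ∧ ∀ c ∈ S, c ∉ c9 ∧ c ∉ c7) ∨
      (3 ∈ S ∧ ∀ c ∈ S, c ∉ c9 ∧ c ∉ c7 ∧ c ∉ c5) ∨
      (11 ∈ S ∧ ∀ c ∈ S, c ∉ c9 ∧ c ∉ c7 ∧ c ∉ c5 ∧ c ∉ c3)) :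
    ∃ T ∈ sols, T.toFinset = S := by
  simp only [List.mem_append] at hm
  have t9 : ∀ c, c ∈ c9 ↔ c = 9 ∨ c ∈ c9.tail := fun c => List.mem_cons
  have t7 : ∀ c, c ∈ c7 ↔ c = 7 ∨ c ∈ c7.tail := fun c => List.mem_cons
  have t5 : ∀ c, c ∈ c5 ↔ c = 5 ∨ c ∈ c5.tail := fun c => List.mem_cons
  have t3 : ∀ c, c ∈ c3 ↔ c = 3 ∨ c ∈ c3.tail := fun c => List.mem_cons
  have t11 : ∀ c, c ∈ c11 ↔ c = 11 ∨ c ∈ c11.tail := fun c => List.mem_cons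
  rcases h with h | ⟨h, h'⟩ | ⟨h, h'⟩ | ⟨h, h'⟩ | ⟨h, h'⟩
  · rcases runD_spec hS sols 9 _ h (by decide) (by
      intro c hc
      have := hm c hc
      rw [t9] at this
      simp only [List.mem_toFinset, List.mem_cons, List.mem_append]
      tauto) run9 with rfl | h1
    · exact (single_spec hS (by decide +kernel)).elim
    · exact h1
  · rcases runD_spec hS sols 7 _ h (by decide) (by
      intro c hc
      have := hm c hc
      have := h' c hc
      rw [t7] at *
      simp only [List.mem_toFinset, List.mem_cons, List.mem_append]
      tauto) run7 with rfl | h1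
    · exact (single_spec hS (by decide +kernel)).elim
    · exact h1
  · rcases runD_spec hS sols 5 _ h (by decide) (by
      intro c hc
      have := hm c hc
      have := h' c hc
      rw [t5] at *
      simp only [List.mem_toFinset, List.mem_cons, List.mem_append]
      tauto) run5 with rfl | h1
    · exact (single_spec hS (by decide +kernel)).elim
    · exact h1
  · rcases runD_spec hS sols 3 _ h (by decide) (by
      intro c hc
      have := hm c hc
      have := h' c hc
      rw [t3] at *
      simp only [List.mem_toFinset, List.mem_cons, List.mem_append]
      tauto) run3 with rfl | h1
    · exact (single_spec hS (by decide +kernel)).elim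
    · exact h1
  · rcases runD_spec hS sols 11 _ h (by decide) (by
      intro c hc
      have := hm c hc
      have := h' c hc
      rw [t11] at *
      simp only [List.mem_toFinset, List.mem_cons]
      tauto) run11 with rfl | h1
    · exact (single_spec hS (by decide +kernel)).elim
    · exact h1

/-- all chord codes -/
def allc : List ℕ := c9 ++ c7 ++ c5 ++ c3 ++ c11

lemma allc_cover : ∀ u v : Fin 22, u.val % 2 ≠ v.val % 2 → v = u + 1 ∨ u = v + 1 ∨
    ∃ c ∈ allc, (pt (c / 32) = u ∧ pt (c % 32) = v) ∨ (pt (c / 32) = v ∧ pt (c % 32) = u) := by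
  decide +kernel

lemma allc_VC : ∀ c ∈ allc, c % 32 < 22 ∧ c / 32 + 1 < c % 32 ∧ c % 32 < c / 32 + 21 := by
  decide +kernel

lemma len9 : ∀ c ∈ c9, pt (c % 32) = pt (c / 32) + 9 ∨ pt (c / 32) = pt (c % 32) + 9 := by
  decide +kernel
lemma len7 : ∀ c ∈ c7, pt (c % 32) = pt (c / 32) + 7 ∨ pt (c / 32) = pt (c % 32) + 7 := by
  decide +kernel
lemma len5 : ∀ c ∈ c5, pt (c % 32) = pt (c / 32) + 5 ∨ pt (c / 32) = pt (c % 32) + 5 := by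
  decide +kernel
lemma len3 : ∀ c ∈ c3, pt (c % 32) = pt (c / 32) + 3 ∨ pt (c / 32) = pt (c % 32) + 3 := by
  decide +kernel
lemma len11 : ∀ c ∈ c11, pt (c % 32) = pt (c / 32) + 11 ∨ pt (c / 32) = pt (c % 32) + 11 := by
  decide +kernel

lemma pt_succ (n : ℕ) : pt (n+1) = pt n + 1 := by
  apply Fin.ext
  rw [pt_val, Fin.val_add, pt_val]
  simp

lemma fin2_flip : ∀ a b c : Fin 2, a ≠ b → (b = c ↔ ¬ a = c) := by decide

lemma parity {G : SimpleGraph (Fin 22)} (hadj : ∀ i, G.Adj i (i+1)) (hcol : G.Colorable 2)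
    {u v : Fin 22} (h : G.Adj u v) : u.val % 2 ≠ v.val % 2 := by
  obtain ⟨c⟩ := hcol
  have key : ∀ n, c (pt n) = c (pt 0) ↔ n % 2 = 0 := by
    intro n
    induction n with
    | zero => simp
    | succ n ih =>
      have h1 := c.valid (hadj (pt n))
      rw [pt_succ, fin2_flip _ _ _ h1, ih]
      omega
  have h1 := c.valid h
  have hu := key u.val
  have hv := key v.val
  rw [pt_fin] at hu hv
  have h2 := fin2_flip _ _ (c (pt 0)) h1
  rw [hu, hv] at h2
  omega

lemma GS_adj {S : Finset ℕ} (hv : ∀ c ∈ S, VC c) (u v : Fin 22) :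
    (GS S).Adj u v ↔ (∃ i < 22, s(u, v) = hcE i) ∨ ∃ c ∈ S, s(u, v) = chE c := by
  rw [← mem_edgeSet, GS_edgeSet S hv]; rfl

lemma GS_card {S : Finset ℕ} (hv : ∀ c ∈ S, VC c) : (GS S).edgeSet.ncard = 22 + #S := by
  have h := GS_edgeSet_ed S.toList (by simpa using hv)
  rw [Finset.toList_toFinset] at h
  rw [h, Set.ncard_image_of_injOn (ed_injOn_set S.toList S.nodup_toList (by simpa using hv)),
    Set.ncard_coe_finset, card_range, Finset.length_toList]

lemma core {G : SimpleGraph (Fin 22)} (hadj : ∀ i, G.Adj i (i+1)) (hcol : G.Colorable 2)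
    (hE : G.edgeSet.ncard ≤ 27)
    (hcnt : ∀ n, cycleCount G (n+3) = if n + 3 ≤ 22 ∧ Even (n+3) then 2 else 0)
    (h : G.Adj 0 9 ∨ (G.Adj 0 7 ∧ ∀ y, ¬ G.Adj y (y+9)) ∨
      (G.Adj 0 5 ∧ (∀ y, ¬ G.Adj y (y+9)) ∧ ∀ y, ¬ G.Adj y (y+7)) ∨
      (G.Adj 0 3 ∧ (∀ y, ¬ G.Adj y (y+9)) ∧ (∀ y, ¬ G.Adj y (y+7)) ∧ ∀ y, ¬ G.Adj y (y+5)) ∨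
      (G.Adj 0 11 ∧ (∀ y, ¬ G.Adj y (y+9)) ∧ (∀ y, ¬ G.Adj y (y+7)) ∧ (∀ y, ¬ G.Adj y (y+5)) ∧
        ∀ y, ¬ G.Adj y (y+3)) ∨
      ((∀ y, ¬ G.Adj y (y+11)) ∧ (∀ y, ¬ G.Adj y (y+9)) ∧ (∀ y, ¬ G.Adj y (y+7)) ∧
        (∀ y, ¬ G.Adj y (y+5)) ∧ ∀ y, ¬ G.Adj y (y+3))) :
    ∃ T ∈ sols, G = GS T.toFinset := by
  classical
  set S : Finset ℕ := allc.toFinset.filter (fun c => G.Adj (pt (c / 32)) (pt (c % 32))) with hS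
  have hmem : ∀ c, c ∈ S ↔ c ∈ allc ∧ G.Adj (pt (c / 32)) (pt (c % 32)) := by
    intro c; rw [hS, mem_filter, List.mem_toFinset]
  have hv : ∀ c ∈ S, VC c := fun c hc => allc_VC c ((hmem c).1 hc).1
  have hG : G = GS S := by
    ext u v
    rw [GS_adj hv]
    constructor
    · intro huv
      rcases allc_cover u v (parity hadj hcol huv) with h1 | h1 | ⟨c, hc, h1⟩
      · left
        refine ⟨u.val, u.isLt, ?_⟩
        rw [hcE, pt_succ, pt_fin, h1]
      · left
        refine ⟨v.val, v.isLt, ?_⟩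
        rw [hcE, pt_succ, pt_fin, h1, Sym2.eq_swap]
      · right
        refine ⟨c, (hmem c).2 ⟨hc, ?_⟩, ?_⟩
        · rcases h1 with ⟨h1, h2⟩ | ⟨h1, h2⟩
          · rw [h1, h2]; exact huv
          · rw [h1, h2]; exact huv.symm
        · rcases h1 with ⟨h1, h2⟩ | ⟨h1, h2⟩
          · rw [chE, h1, h2]
          · rw [chE, h1, h2, Sym2.eq_swap]
    · rintro (⟨i, _, h1⟩ | ⟨c, hc, h1⟩)
      · rw [← mem_edgeSet, h1, hcE, mem_edgeSet, pt_succ]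
        exact hadj _
      · rw [← mem_edgeSet, h1, chE, mem_edgeSet]
        exact ((hmem c).1 hc).2
  have hgood : Good S := by
    refine ⟨hv, ?_, ?_⟩
    · rw [hG, GS_card hv] at hE
      omega
    · intro n; rw [← hG]; exact hcnt n
  have ex : ∀ (l : List ℕ) (d : Fin 22), (∀ c ∈ l, pt (c % 32) = pt (c / 32) + d ∨
      pt (c / 32) = pt (c % 32) + d) → (∀ y, ¬ G.Adj y (y + d)) → ∀ c ∈ S, c ∉ l := by
    intro l d hl hn c hc hcl
    have h1 := ((hmem c).1 hc).2
    rcases hl c hcl with h2 | h2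
    · rw [h2] at h1; exact hn _ h1
    · rw [h2] at h1; exact hn _ h1.symm
  have hm : ∀ c ∈ S, c ∈ c9 ++ c7 ++ c5 ++ c3 ++ c11 := fun c hc => ((hmem c).1 hc).1
  have fin : (∃ T ∈ sols, T.toFinset = S) → ∃ T ∈ sols, G = GS T.toFinset := by
    rintro ⟨T, h1, h2⟩
    exact ⟨T, h1, by rw [h2]; exact hG⟩
  rcases h with h | ⟨h, n9⟩ | ⟨h, n9, n7⟩ | ⟨h, n9, n7, n5⟩ | ⟨h, n9, n7, n5, n3⟩ |
    ⟨n11, n9, n7, n5, n3⟩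
  · exact fin (good_sols hgood hm (Or.inl ((hmem 9).2 ⟨by decide, h⟩)))
  · exact fin (good_sols hgood hm (Or.inr (Or.inl ⟨(hmem 7).2 ⟨by decide, h⟩,
      ex c9 9 len9 n9⟩)))
  · exact fin (good_sols hgood hm (Or.inr (Or.inr (Or.inl ⟨(hmem 5).2 ⟨by decide, h⟩,
      fun c hc => ⟨ex c9 9 len9 n9 c hc, ex c7 7 len7 n7 c hc⟩⟩))))
  · exact fin (good_sols hgood hm (Or.inr (Or.inr (Or.inr (Or.inl ⟨(hmem 3).2 ⟨by decide, h⟩,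
      fun c hc => ⟨ex c9 9 len9 n9 c hc, ex c7 7 len7 n7 c hc, ex c5 5 len5 n5 c hc⟩⟩)))))
  · exact fin (good_sols hgood hm (Or.inr (Or.inr (Or.inr (Or.inr ⟨(hmem 11).2 ⟨by decide, h⟩,
      fun c hc => ⟨ex c9 9 len9 n9 c hc, ex c7 7 len7 n7 c hc, ex c5 5 len5 n5 c hc,
        ex c3 3 len3 n3 c hc⟩⟩)))))
  · exfalso
    have : S = ∅ := by
      apply Finset.eq_empty_of_forall_notMem
      intro c hc
      have h1 := hm c hc
      simp only [List.mem_append] at h1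
      rcases h1 with (((h1 | h1) | h1) | h1) | h1
      · exact ex c9 9 len9 n9 c hc h1
      · exact ex c7 7 len7 n7 c hc h1
      · exact ex c5 5 len5 n5 c hc h1
      · exact ex c3 3 len3 n3 c hc h1
      · exact ex c11 11 len11 n11 c hc h1
    rw [this] at hgood
    exact empty_spec hgood

lemma iso_edge {V W : Type*} {G : SimpleGraph V} {H : SimpleGraph W} (e : G ≃g H) :
    G.edgeSet.ncard = H.edgeSet.ncard := by
  rw [← Nat.card_coe_set_eq, ← Nat.card_coe_set_eq]
  exact Nat.card_congr e.mapEdgeSet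

lemma odd_count {V : Type*} {G : SimpleGraph V} (hcol : G.Colorable 2) (n : ℕ)
    (hn : ¬ Even (n+3)) : cycleCount G (n+3) = 0 := by
  rw [cycleCount_eq]
  have : CycSet G n = ∅ := by
    rw [Set.eq_empty_iff_forall_notMem]
    rintro D ⟨f, hf, hadj, -⟩
    have hom : ∀ {i j}, (cycleGraph (n+3)).Adj i j → G.Adj (f i) (f j) := by
      intro i j h
      rcases (cyc_adj_iff i j).1 h with h | h
      · subst h; exact hadj i
      · subst h; exact (hadj j).symm
    have h1 : (cycleGraph (n+3)).Colorable 2 := by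
      obtain ⟨c⟩ := hcol
      exact ⟨c.comp ⟨f, hom⟩⟩
    have h2 := chromaticNumber_cycleGraph_of_odd (n+3) (by omega) (Nat.not_even_iff_odd.1 hn)
    have h3 := h1.chromaticNumber_le
    rw [h2] at h3
    exact absurd h3 (by decide)
  rw [this, Set.ncard_empty]

lemma big_count {V : Type*} [Fintype V] {G : SimpleGraph V} (n : ℕ)
    (hn : Fintype.card V < n + 3) : cycleCount G (n+3) = 0 := by
  rw [cycleCount_eq]
  have : CycSet G n = ∅ := by
    rw [Set.eq_empty_iff_forall_notMem]
    rintro D ⟨f, hf, hadj, -⟩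
    have := Fintype.card_le_of_injective f hf
    rw [Fintype.card_fin] at this
    omega
  rw [this, Set.ncard_empty]

lemma full {W : Type} [Fintype W] {G : SimpleGraph W} (hW : Fintype.card W = 22)
    (hE : G.edgeSet.ncard ≤ 27) (hG : IsRBipancyclic G 2) :
    ∃ T ∈ sols, Nonempty (G ≃g GS T.toFinset) := by
  obtain ⟨hcol, -, -, hcnt⟩ := hG
  have h22 := hcnt 22 (by norm_num) (by omega) (by decide)
  have hall : ∀ n, cycleCount G (n+3) = if n + 3 ≤ 22 ∧ Even (n+3) then 2 else 0 := by
    intro n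
    split_ifs with h
    · refine hcnt _ ?_ (by omega) h.2
      rcases h.2 with ⟨r, hr⟩
      omega
    · by_cases h1 : n + 3 ≤ 22
      · exact odd_count hcol n (fun h2 => h ⟨h1, h2⟩)
      · exact big_count n (by omega)
  rw [cycleCount_eq G 19] at h22
  obtain ⟨D, f, hf, hadj, -⟩ := Set.nonempty_of_ncard_ne_zero (by rw [h22]; norm_num :
    (CycSet G 19).ncard ≠ 0)
  have hbij : Function.Bijective f :=
    (Fintype.bijective_iff_injective_and_card f).2 ⟨hf, by rw [hW]; simp⟩
  let ef : Fin 22 ≃ W := Equiv.ofBijective f hbij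
  let G0 : SimpleGraph (Fin 22) := G.comap ef
  let G1 : Fin 22 → SimpleGraph (Fin 22) := fun x => G0.comap (Equiv.addRight x)
  have iso1 : ∀ x, Nonempty (G1 x ≃g G) := fun x =>
    ⟨(Iso.comap (Equiv.addRight x) G0).trans (Iso.comap ef G)⟩
  have adj1 : ∀ x u v, (G1 x).Adj u v ↔ G0.Adj (u + x) (v + x) := fun x u v => Iff.rfl
  have main : ∀ x, ((G1 x).Adj 0 9 ∨ ((G1 x).Adj 0 7 ∧ ∀ y, ¬ (G1 x).Adj y (y+9)) ∨
      ((G1 x).Adj 0 5 ∧ (∀ y, ¬ (G1 x).Adj y (y+9)) ∧ ∀ y, ¬ (G1 x).Adj y (y+7)) ∨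
      ((G1 x).Adj 0 3 ∧ (∀ y, ¬ (G1 x).Adj y (y+9)) ∧ (∀ y, ¬ (G1 x).Adj y (y+7)) ∧
        ∀ y, ¬ (G1 x).Adj y (y+5)) ∨
      ((G1 x).Adj 0 11 ∧ (∀ y, ¬ (G1 x).Adj y (y+9)) ∧ (∀ y, ¬ (G1 x).Adj y (y+7)) ∧
        (∀ y, ¬ (G1 x).Adj y (y+5)) ∧ ∀ y, ¬ (G1 x).Adj y (y+3)) ∨
      ((∀ y, ¬ (G1 x).Adj y (y+11)) ∧ (∀ y, ¬ (G1 x).Adj y (y+9)) ∧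
        (∀ y, ¬ (G1 x).Adj y (y+7)) ∧ (∀ y, ¬ (G1 x).Adj y (y+5)) ∧
        ∀ y, ¬ (G1 x).Adj y (y+3))) → ∃ T ∈ sols, Nonempty (G ≃g GS T.toFinset) := by
    intro x hx
    obtain ⟨e⟩ := iso1 x
    obtain ⟨T, hT, hT'⟩ := core (G := G1 x) (by
        intro i
        rw [adj1, add_right_comm]
        exact hadj (i + x)) (by
        obtain ⟨c⟩ := hcol
        exact ⟨c.comp e.toHom⟩) (by rw [iso_edge e]; exact hE) (by
        intro n; rw [cycleCount_iso e]; exact hall n) hx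
    refine ⟨T, hT, ?_⟩
    rw [← hT']
    exact ⟨e.symm⟩
  have tr : ∀ x d, (∀ y, ¬ G0.Adj y (y+d)) → ∀ y, ¬ (G1 x).Adj y (y+d) := by
    intro x d h y
    rw [adj1, add_right_comm]
    exact h (y + x)
  have tr0 : ∀ x d, G0.Adj x (x+d) → (G1 x).Adj 0 d := by
    intro x d h
    rw [adj1, zero_add, add_comm d]
    exact h
  by_cases n9 : ∃ x, G0.Adj x (x+9)
  · obtain ⟨x, hx⟩ := n9
    exact main x (Or.inl (tr0 x 9 hx))
  push Not at n9
  by_cases n7 : ∃ x, G0.Adj x (x+7)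
  · obtain ⟨x, hx⟩ := n7
    exact main x (Or.inr (Or.inl ⟨tr0 x 7 hx, tr x 9 n9⟩))
  push Not at n7
  by_cases n5 : ∃ x, G0.Adj x (x+5)
  · obtain ⟨x, hx⟩ := n5
    exact main x (Or.inr (Or.inr (Or.inl ⟨tr0 x 5 hx, tr x 9 n9, tr x 7 n7⟩)))
  push Not at n5
  by_cases n3 : ∃ x, G0.Adj x (x+3)
  · obtain ⟨x, hx⟩ := n3
    exact main x (Or.inr (Or.inr (Or.inr (Or.inl ⟨tr0 x 3 hx, tr x 9 n9, tr x 7 n7, tr x 5 n5⟩))))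
  push Not at n3
  by_cases n11 : ∃ x, G0.Adj x (x+11)
  · obtain ⟨x, hx⟩ := n11
    exact main x (Or.inr (Or.inr (Or.inr (Or.inr (Or.inl ⟨tr0 x 11 hx, tr x 9 n9, tr x 7 n7,
      tr x 5 n5, tr x 3 n3⟩)))))
  push Not at n11
  exact main 0 (Or.inr (Or.inr (Or.inr (Or.inr (Or.inr ⟨tr 0 11 n11, tr 0 9 n9, tr 0 7 n7,
    tr 0 5 n5, tr 0 3 n3⟩)))))

/-- computable adjacency test for `GS` -/
def aN (T : List ℕ) (u v : ℕ) : Bool :=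
  Nat.beq v ((u+1) % 22) || Nat.beq u ((v+1) % 22) ||
    T.any (fun c => Nat.beq c (32 * u + v) || Nat.beq c (32 * v + u))

lemma aN_iff {T : List ℕ} (hv : ∀ c ∈ T, VC c) (u v : Fin 22) :
    (GS T.toFinset).Adj u v ↔ aN T u.val v.val = true := by
  rw [GS_adj (by simpa using hv)]
  simp only [aN, Bool.or_eq_true, List.any_eq_true, Nat.beq_eq, List.mem_toFinset]
  have hu := u.isLt
  have hv' := v.isLt
  apply or_congr
  · constructor
    · rintro ⟨i, hi, h⟩
      rw [hcE, Sym2.eq_iff] at h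
      simp only [Fin.ext_iff, pt_val] at h
      omega
    · rintro (h | h)
      · refine ⟨u.val, hu, ?_⟩
        rw [hcE, Sym2.eq_iff]
        simp only [Fin.ext_iff, pt_val]
        omega
      · refine ⟨v.val, hv', ?_⟩
        rw [hcE, Sym2.eq_iff]
        simp only [Fin.ext_iff, pt_val]
        omega
  · apply exists_congr
    intro c
    apply and_congr_right
    intro hc
    have h1 := hv c hc
    unfold VC at h1
    rw [chE, Sym2.eq_iff]
    simp only [Fin.ext_iff, pt_val]
    omega

/-- the ten graphs -/
def tab (i : Fin 10) : List ℕ :=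
  ([[3, 104, 108, 141], [3, 137, 141, 174], [3, 170, 174, 207], [3, 203, 207, 240],
    [3, 236, 240, 273], [3, 269, 273, 306], [3, 302, 306, 339], [3, 335, 339, 372],
    [3, 368, 372, 405], [3, 401, 405, 13]] : List (List ℕ)).getD i.val []

lemma tab_VC : ∀ i, ∀ c ∈ tab i, c % 32 < 22 ∧ c / 32 + 1 < c % 32 ∧ c % 32 < c / 32 + 21 := by
  decide +kernel

lemma sols_VC : ∀ T ∈ sols, ∀ c ∈ T, c % 32 < 22 ∧ c / 32 + 1 < c % 32 ∧ c % 32 < c / 32 + 21 := by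
  decide +kernel

/-- for each solution: index of the isomorphic graph, reflection flag, and shift -/
def cert : List (Fin 10 × Bool × Fin 22) :=
  [(9, false, 12), (8, false, 11), (7, false, 10), (6, false, 9), (5, false, 8), (4, false, 7),
   (3, false, 6), (2, false, 5), (1, false, 4), (0, false, 3), (0, true, 13), (1, true, 14),
   (2, true, 15), (3, true, 16), (4, true, 17), (5, true, 18), (6, true, 19), (7, true, 20),
   (8, true, 21), (9, true, 0), (0, true, 12), (1, true, 13), (2, true, 14), (3, true, 15),
   (4, true, 16), (5, true, 17), (6, true, 18), (7, true, 19), (8, true, 20), (9, true, 21),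
   (9, false, 13), (8, false, 12), (7, false, 11), (6, false, 10), (5, false, 9), (4, false, 8),
   (3, false, 7), (2, false, 6), (1, false, 5), (0, false, 4)]

/-- the dihedral map given by a flag and a shift -/
def sg (b : Bool) (r : Fin 22) : Fin 22 ≃ Fin 22 := bif b then Equiv.subLeft r else Equiv.addLeft r

lemma sg_val (b : Bool) (r x : Fin 22) :
    (sg b r x).val = bif b then (22 - x.val + r.val) % 22 else (r.val + x.val) % 22 := by
  cases b
  · show (r + x).val = _
    rw [Fin.val_add]; rfl
  · show (r - x).val = _
    rw [Fin.sub_def]; rfl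

/-- the same map on numbers -/
def sN (b : Bool) (r x : ℕ) : ℕ := bif b then (22 - x + r) % 22 else (r + x) % 22

lemma cert_ok : ((sols.zip cert).all fun p => (List.range 22).all fun u => (List.range 22).all fun v =>
    (aN p.1 u v) == (aN (tab p.2.1) (sN p.2.2.1 p.2.2.2.val u) (sN p.2.2.1 p.2.2.2.val v))) = true := by
  decide +kernel

lemma sols_iso {T : List ℕ} (hT : T ∈ sols) : ∃ i, Nonempty (GS T.toFinset ≃g GS (tab i).toFinset) := by
  have hlen : sols.length = cert.length := by decide
  obtain ⟨n, hn, rfl⟩ := List.getElem_of_mem hT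
  have hp : (sols[n], cert[n]'(hlen ▸ hn)) ∈ sols.zip cert := by
    rw [← List.getElem_zip (h := by rw [List.length_zip]; omega)]
    exact List.getElem_mem _
  generalize cert[n]'(hlen ▸ hn) = q at hp
  have h := List.all_eq_true.1 cert_ok _ hp
  refine ⟨q.1, ⟨⟨sg q.2.1 q.2.2, ?_⟩⟩⟩
  intro u v
  rw [aN_iff (tab_VC _), aN_iff (sols_VC _ hT)]
  have h1 := List.all_eq_true.1 (List.all_eq_true.1 h u.val (by simp)) v.val (by simp)
  rw [beq_iff_eq] at h1
  rw [sg_val, sg_val]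
  simp only [sN] at h1
  rw [h1]

/-- count closed under isomorphism: number of walks of length `t` from `v` -/
noncomputable def wt (G : SimpleGraph (Fin 22)) : ℕ → Fin 22 → ℕ
  | 0, _ => 1
  | t+1, v => by classical exact ∑ u, if G.Adj v u then wt G t u else 0

lemma wt_iso {G H : SimpleGraph (Fin 22)} (e : G ≃g H) (t : ℕ) : ∀ v, wt G t v = wt H t (e v) := by
  induction t with
  | zero => intro v; rfl
  | succ t ih =>
    intro v
    classical
    simp only [wt]
    refine Finset.sum_equiv e.toEquiv (by simp) ?_
    intro u _
    have h1 : H.Adj (e v) (e.toEquiv u) ↔ G.Adj v u := e.map_adj_iff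
    have h2 : wt G t u = wt H t (e.toEquiv u) := ih u
    rw [h2]
    exact if_congr h1.symm rfl rfl

lemma wt_sum {G H : SimpleGraph (Fin 22)} (e : G ≃g H) (t : ℕ) :
    ∑ v, (wt G t v) ^ 2 = ∑ v, (wt H t v) ^ 2 := by
  refine Finset.sum_equiv e.toEquiv (by simp) ?_
  intro u _
  have h2 : wt G t u = wt H t (e.toEquiv u) := wt_iso e t u
  rw [h2]

def wB (T : List ℕ) : ℕ → ℕ → ℕ
  | 0, _ => 1
  | t+1, v => ∑ u ∈ range 22, if aN T v u = true then wB T t u else 0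

lemma wt_wB {T : List ℕ} (hv : ∀ c ∈ T, VC c) (t : ℕ) :
    ∀ v : Fin 22, wt (GS T.toFinset) t v = wB T t v.val := by
  induction t with
  | zero => intro v; rfl
  | succ t ih =>
    intro v
    simp only [wt, wB]
    rw [← Fin.sum_univ_eq_sum_range (fun u => if aN T v.val u = true then wB T t u else 0)]
    apply Finset.sum_congr rfl
    intro u _
    simp only [aN_iff hv, ih]

def vals (i : Fin 10) : ℕ :=
  ([7538, 6210, 5854, 5754, 5732, 5730, 5742, 5800, 6014, 6790] : List ℕ).getD i.val 0

lemma vals_ok : ∀ i : Fin 10, ∑ v ∈ range 22, (wB (tab i) 3 v) ^ 2 = vals i := by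
  decide +kernel

lemma vals_inj : ∀ i j : Fin 10, vals i = vals j → i = j := by decide +kernel

lemma vals_eq (i : Fin 10) : vals i = ∑ v, (wt (GS (tab i).toFinset) 3 v) ^ 2 := by
  refine (vals_ok i).symm.trans ?_
  generalize hT : tab i = T
  have hv : ∀ c ∈ T, VC c := hT ▸ tab_VC i
  rw [← Fin.sum_univ_eq_sum_range (fun v => (wB T 3 v) ^ 2)]
  apply Finset.sum_congr rfl
  intro v _
  rw [wt_wB hv]

lemma not_iso {i j : Fin 10} (hij : i ≠ j) : IsEmpty (GS (tab i).toFinset ≃g GS (tab j).toFinset) :=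
  ⟨fun e => hij (vals_inj i j ((vals_eq i).trans ((wt_sum e 3).trans (vals_eq j).symm)))⟩

/-- cycles of the graph with chords `T` -/
noncomputable def build : List ℕ → (List ℕ → List ℕ → ℕ → Bool) → Bool
  | [], k => k [0, HC] [HC] (4 ^ 22)
  | c :: T, k => build T (fun ev cy N => ext cy (fm T.length c) k ev ev.reverse cy N)

lemma ext_inv2 {T : List ℕ} {E C : List (Finset ℕ)} (hI : Inv T E C) (hlen : T.length ≤ 7) {c : ℕ}
    (hc : VC c) :
    ∃ E' C', Inv (c :: T) E' C' ∧ ∀ k : List ℕ → List ℕ → ℕ → Bool,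
      ext (C.map enc) (fm T.length c) k (E.map enc) (E.map enc).reverse (C.map enc) (pk C) =
        k (E'.map enc) (C'.map enc) (pk C') := by
  refine ⟨_, _, Inv_cons hI hc, fun k => ?_⟩
  rw [fm_eq hc, ← List.map_reverse, ext_spec C _ k (Inv_sub hI hlen).2 (FF_sub hc hlen) E
    (Inv_sub hI hlen).1, List.reverse_reverse]

lemma build_spec (T : List ℕ) (hv : ∀ c ∈ T, VC c) (hl : T.length ≤ 7) :
    ∃ E C, Inv T E C ∧ ∀ k, build T k = k (E.map enc) (C.map enc) (pk C) := by
  induction T with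
  | nil =>
    refine ⟨_, _, Inv_nil, fun k => ?_⟩
    have e1 : ([∅, range 22] : List (Finset ℕ)).map enc = [0, HC] := by simp [enc_empty, enc_HC]
    have e2 : ([range 22] : List (Finset ℕ)).map enc = [HC] := by simp [enc_HC]
    have e3 : pk [range 22] = 4 ^ 22 := by simp [pk]
    rw [e1, e2, e3]; rfl
  | cons c T ih =>
    have hl' : T.length ≤ 7 := by simp at hl; omega
    obtain ⟨E, C, hI, hb⟩ := ih (fun c hc => hv c (by simp [hc])) hl'
    obtain ⟨E', C', hI', h'⟩ := ext_inv2 hI hl' (hv c (by simp))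
    refine ⟨E', C', hI', fun k => ?_⟩
    rw [build, hb, h']

noncomputable def chk (T : List ℕ) : Bool :=
  build T (fun _ cy _ => (List.range 10).all fun j =>
    Nat.beq (cy.countP (fun m => Nat.beq (lenPow m) (4 ^ (2 * j + 4)))) 2)

lemma chk_ok : ∀ i, chk (tab i) = true := by decide +kernel

lemma tab_basic : ∀ i, (tab i).Nodup ∧ (tab i).length = 4 := by decide +kernel

lemma tab_count (i : Fin 10) (k : ℕ) (h4 : 4 ≤ k) (h22 : k ≤ 22) (he : Even k) :
    cycleCount (GS (tab i).toFinset) k = 2 := by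
  obtain ⟨r, hr⟩ := he
  obtain ⟨j, rfl⟩ : ∃ j, k = 2 * j + 4 := ⟨r - 2, by omega⟩
  obtain ⟨hn, hlen⟩ := tab_basic i
  obtain ⟨E, C, hI, hb⟩ := build_spec (tab i) (tab_VC i) (by omega)
  have h := chk_ok i
  rw [chk, hb] at h
  have h1 := List.all_eq_true.1 h j (by simp; omega)
  rw [Nat.beq_eq, List.countP_map] at h1
  have h2 := cnt_eq hn (tab_VC i) hI (2 * j + 1)
  rw [show 2 * j + 1 + 3 = 2 * j + 4 by omega] at h2
  rw [← h2]
  refine Eq.trans ?_ h1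
  unfold cnt
  apply List.countP_congr
  intro A hA
  have hA' := (Inv_sub hI (by omega)).2 A hA
  simp only [Function.comp_apply, lenPow_enc hA', Nat.beq_eq, beq_iff_eq]
  exact (Nat.pow_right_injective (by norm_num : 2 ≤ 4)).eq_iff.symm

lemma tab_parity : ∀ i : Fin 10, ∀ u v : Fin 22, aN (tab i) u.val v.val = true →
    u.val % 2 ≠ v.val % 2 := by decide +kernel

lemma tab_col (i : Fin 10) : (GS (tab i).toFinset).Colorable 2 := by
  refine ⟨Coloring.mk (fun v => Fin.ofNat 2 v.val) ?_⟩
  intro u v h h1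
  apply tab_parity i u v ((aN_iff (tab_VC i) u v).1 h)
  exact congrArg Fin.val h1

lemma main_thm : ExactlyNUpToIso 2 10 22 27 := by
  refine ⟨fun i => GS (tab i).toFinset, fun i j h => not_iso h, fun i => ⟨⟨tab_col i, ?_, ?_, ?_⟩, ?_⟩, ?_⟩
  · rw [Fintype.card_fin]; decide
  · rw [Fintype.card_fin]; decide
  · intro k h4 h22 he
    rw [Fintype.card_fin] at h22
    exact tab_count i k h4 h22 he
  · rw [GS_card (S := (tab i).toFinset) (fun c hc => tab_VC i c (by simpa using hc))]
    have := List.toFinset_card_le (tab i)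
    rw [(tab_basic i).2] at this
    omega
  · intro W _ G hW hE hG
    obtain ⟨T, hT, ⟨e⟩⟩ := full hW hE hG
    obtain ⟨i, ⟨e'⟩⟩ := sols_iso hT
    exact ⟨i, ⟨e.trans e'⟩⟩

end BP

theorem two_bipancyclic_count_order_22 : ExactlyNUpToIso 2 10 22 27 := by
  exact BP.main_thm
end
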